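/- In the blow-up setup with the concentration hypothesis: for every compact set ω contained in B there exists C > 0 such that, for all sufficiently large i, |u_i(x)| ≤ C·ν_i^{(n−2k)/2}·|x|^{2k−n} for all x ∈ ω with |x| ≥ ν_i. -/

import Mathlib

/-!
Fix a unit vector `e` and put `γ = (n - 2k) / 2`. For radial `u` the Emden-Fowler transform
`V t = exp (γ t) u (exp t • e)` turns `Δ ^ k` into an operator with constant coefficients which
factors as `∏ (D - σ)` over the exponents `σ = ± (γ + 2j)`, `j < k` (`iterLap_eq_prodOp`), and the
equation becomes `∏ (D - σ) V = λ exp (2kt) V + |V| ^ (2* - 2) V` on `t < 0`. The Dirichlet conditions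
say that `V` and its first `k - 1` derivatives vanish at `t = 0`, and the local convergence of the
rescaled functions bounds all derivatives of `V` at `t = log (R ν_i)` (`data_bound`). Hence the `k`
growing factors can be integrated backwards from `0` and the `k` decaying ones forwards from
`log (R ν_i)`, which gives a priori estimates with constants independent of the length of the interval
(`linear_estimate`).

The claim for `|x| ≥ R ν_i` amounts to decay of `V` at the rate `γ` of the slowest decaying factor,
which is obtained in three stages. The energy bound yields a uniform bound for `V` (`bounded_of_energy`);
this is needed because a real `limsup` carries information only for a bounded sequence. The
concentration hypothesis then makes `V` small for a suitable `R`, so that the nonlinearity is a small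
potential and `V` decays at some rate `α < γ` with `γ < (2* - 1) α` (`decay_subcritical`). Finally the
nonlinearity decays faster than `exp (-γ t)`, the term with `λ` has an integrable weight, and the rate
improves to `γ` (`decay_critical`, combined in `decay_main`). In the annulus `ν_i ≤ |x| ≤ R ν_i` the
claim is the boundedness of the rescaled functions (`annulus_bound`).
-/

open MeasureTheory Metric Filter Topology Real

noncomputable section

def lap {n : ℕ} (u : EuclideanSpace ℝ (Fin n) → ℝ) : EuclideanSpace ℝ (Fin n) → ℝ :=
  fun x => ∑ i : Fin n, iteratedFDeriv ℝ 2 u x (fun _ => EuclideanSpace.single i 1)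

def iterLap {n : ℕ} (k : ℕ) (u : EuclideanSpace ℝ (Fin n) → ℝ) :
    EuclideanSpace ℝ (Fin n) → ℝ :=
  lap^[k] u

def twoStar (n k : ℕ) : ℝ := 2 * n / ((n : ℝ) - 2 * k)

def ank (n k : ℕ) : ℝ :=
  (∏ j ∈ Finset.range (2 * k), ((n : ℝ) + 2 * ((j : ℝ) - (k : ℝ)))) ^ (-(1 : ℝ) / (k : ℝ))

def Ubub (n k : ℕ) (x : EuclideanSpace ℝ (Fin n)) : ℝ :=
  (1 / (1 + ank n k * ‖x‖ ^ 2)) ^ (((n : ℝ) - 2 * k) / 2)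

def BlowUpSetup (n k : ℕ) (M : ℝ) (lam : ℕ → ℝ)
    (u : ℕ → EuclideanSpace ℝ (Fin n) → ℝ) : Prop :=
  (∀ i, 0 < lam i) ∧ Filter.Tendsto lam Filter.atTop (nhds 0) ∧
  (∀ i, ContDiff ℝ (2 * k : ℕ) (u i)) ∧
  (∀ i, ∀ x y : EuclideanSpace ℝ (Fin n), ‖x‖ = ‖y‖ → u i x = u i y) ∧
  (∀ i, ∀ x ∈ Metric.ball (0 : EuclideanSpace ℝ (Fin n)) 1,
    iterLap k (u i) x - lam i * u i x = |u i x| ^ (twoStar n k - 2) * u i x) ∧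
  (∀ i, ∀ x : EuclideanSpace ℝ (Fin n), ‖x‖ = 1 → ∀ j < k,
    iteratedFDeriv ℝ j (u i) x (fun _ => x) = 0) ∧
  (∀ i, ∃ x ∈ Metric.closedBall (0 : EuclideanSpace ℝ (Fin n)) 1, u i x ≠ 0) ∧
  (∀ i, (∫ x in Metric.ball (0 : EuclideanSpace ℝ (Fin n)) 1, |u i x| ^ twoStar n k)
      ≤ M ^ twoStar n k)

def CLocConv {n : ℕ} (m : ℕ) (S : Set (EuclideanSpace ℝ (Fin n)))
    (f : ℕ → EuclideanSpace ℝ (Fin n) → ℝ) (g : EuclideanSpace ℝ (Fin n) → ℝ) : Prop :=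
  ∀ K : Set (EuclideanSpace ℝ (Fin n)), K ⊆ S → IsCompact K → ∀ j ≤ m,
    Filter.Tendsto
      (fun i => ⨆ x : K, ‖iteratedFDeriv ℝ j (f i) (x : EuclideanSpace ℝ (Fin n))
        - iteratedFDeriv ℝ j g (x : EuclideanSpace ℝ (Fin n))‖)
      Filter.atTop (nhds 0)

def Concentration (n k : ℕ) (u : ℕ → EuclideanSpace ℝ (Fin n) → ℝ)
    (ν : ℕ → ℝ) (ε₀ : ℝ) : Prop :=
  (∀ i, 0 < ν i) ∧ Filter.Tendsto ν Filter.atTop (nhds 0) ∧ (ε₀ = 1 ∨ ε₀ = -1) ∧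
  CLocConv (2 * k) {(0 : EuclideanSpace ℝ (Fin n))}ᶜ
    (fun i z => (ν i) ^ (((n : ℝ) - 2 * k) / 2) * u i ((ν i) • z))
    (fun z => ε₀ * Ubub n k z) ∧
  Filter.Tendsto (fun R : ℝ => Filter.limsup (fun i =>
      ⨆ x : {x : EuclideanSpace ℝ (Fin n) //
        x ∈ Metric.ball (0 : EuclideanSpace ℝ (Fin n)) 1 ∧ R * ν i ≤ ‖x‖},
        ‖(x : EuclideanSpace ℝ (Fin n))‖ ^ (((n : ℝ) - 2 * k) / 2)
          * |u i (x : EuclideanSpace ℝ (Fin n))|) Filter.atTop)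
    Filter.atTop (nhds 0)

def Tfun (n k : ℕ) (u : EuclideanSpace ℝ (Fin n) → ℝ) (x : EuclideanSpace ℝ (Fin n)) : ℝ :=
  (((n : ℝ) - 2 * k) / 2) * u x + fderiv ℝ u x x

def ndS {n : ℕ} (u : EuclideanSpace ℝ (Fin n) → ℝ) (x : EuclideanSpace ℝ (Fin n)) : ℝ :=
  fderiv ℝ u x (‖x‖⁻¹ • x)

def halfLapSq {n : ℕ} (k : ℕ) (u : EuclideanSpace ℝ (Fin n) → ℝ)
    (x : EuclideanSpace ℝ (Fin n)) : ℝ :=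
  if k % 2 = 0 then (iterLap (k / 2) u x) ^ 2 else ‖gradient (iterLap (k / 2) u) x‖ ^ 2

def Sfun (n k : ℕ) (u : EuclideanSpace ℝ (Fin n) → ℝ) (x : EuclideanSpace ℝ (Fin n)) : ℝ :=
  (∑ i ∈ Finset.range (k / 2),
    (-(ndS (iterLap (k - i - 1) u) x) * iterLap i (Tfun n k u) x
      + iterLap (k - i - 1) u x * ndS (iterLap i (Tfun n k u)) x))
  - (if k % 2 = 1 then ndS (iterLap (k / 2) u) x * iterLap (k / 2) (Tfun n k u) x else 0)

def sphVol (n : ℕ) : ℝ :=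
  (μH[(n : ℝ) - 1] (Metric.sphere (0 : EuclideanSpace ℝ (Fin n)) 1)).toReal

def Cnk (n k : ℕ) : ℝ :=
  1 / (((n : ℝ) - 2) * sphVol n *
    ∏ i ∈ Finset.Icc 1 (k - 1), (((n : ℝ) - 2 * k + 2 * ((i : ℝ) - 1)) * (2 * (k : ℝ) - 2 * (i : ℝ))))

/-! ### First-order operators and their products -/

/-- The first-order operator `D - σ` on functions of one real variable. -/
def Lop (σ : ℝ) (h : ℝ → ℝ) : ℝ → ℝ := fun t => deriv h t - σ * h t

/-- The composition of the operators `D - σ` for `σ` in a list; the head of the list acts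
first. -/
def prodOp : List ℝ → (ℝ → ℝ) → ℝ → ℝ
  | [], h => h
  | σ :: l, h => prodOp l (Lop σ h)

lemma prodOp_append (l₁ l₂ : List ℝ) (h : ℝ → ℝ) : prodOp (l₁ ++ l₂) h = prodOp l₂ (prodOp l₁ h) := by
  induction l₁ generalizing h with
  | nil => rfl
  | cons σ l ih => exact ih _

lemma contDiff_Lop {m : ℕ} {σ : ℝ} {h : ℝ → ℝ} (hh : ContDiff ℝ ((m + 1 : ℕ) : WithTop ℕ∞) h) :
    ContDiff ℝ m (Lop σ h) := by
  have h1 : ContDiff ℝ m (deriv h) := by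
    have := (contDiff_succ_iff_deriv (n := (m : WithTop ℕ∞)) (f := h)).1 (by exact_mod_cast hh)
    exact this.2.2
  exact h1.sub (contDiff_const.mul (hh.of_le (by exact_mod_cast Nat.le_succ m)))

lemma contDiff_prodOp {m : ℕ} (l : List ℝ) {h : ℝ → ℝ}
    (hh : ContDiff ℝ ((m + l.length : ℕ) : WithTop ℕ∞) h) : ContDiff ℝ m (prodOp l h) := by
  induction l generalizing h with
  | nil => exact hh
  | cons σ l ih => exact ih (contDiff_Lop hh)

lemma Lop_comm (σ τ : ℝ) {h : ℝ → ℝ} (hh : ContDiff ℝ 2 h) :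
    Lop σ (Lop τ h) = Lop τ (Lop σ h) := by
  have h1 : Differentiable ℝ h := hh.differentiable (by norm_num)
  have h2 : Differentiable ℝ (deriv h) := by
    have := (contDiff_succ_iff_deriv (n := 1) (f := h)).1 (by exact_mod_cast hh)
    exact this.2.2.differentiable (by norm_num)
  have key : ∀ σ : ℝ, ∀ t, deriv (Lop σ h) t = deriv (deriv h) t - σ * deriv h t := by
    intro σ t
    have := ((h2 t).hasDerivAt.sub ((h1 t).hasDerivAt.const_mul σ)).deriv
    exact this
  funext t
  change deriv (Lop τ h) t - σ * (deriv h t - τ * h t)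
    = deriv (Lop σ h) t - τ * (deriv h t - σ * h t)
  rw [key, key]; ring

/-- First-order operators with constant coefficients commute, so the order of the exponents is
immaterial on sufficiently smooth functions. -/
lemma prodOp_perm {l₁ l₂ : List ℝ} (hp : l₁.Perm l₂) {h : ℝ → ℝ} (hh : ContDiff ℝ l₁.length h) :
    prodOp l₁ h = prodOp l₂ h := by
  induction hp generalizing h with
  | nil => rfl
  | cons x _ ih => exact ih (contDiff_Lop hh)
  | swap x y l =>
    change prodOp l (Lop x (Lop y h)) = prodOp l (Lop y (Lop x h))
    rw [Lop_comm]
    exact hh.of_le (by simp only [List.length_cons]; exact_mod_cast (by omega))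
  | trans h1 _ ih1 ih2 =>
    rw [ih1 hh, ih2 (by rw [← h1.length_eq]; exact hh)]

lemma prodOp_add (l : List ℝ) {g h : ℝ → ℝ} (hg : ContDiff ℝ l.length g)
    (hh : ContDiff ℝ l.length h) : prodOp l (fun t => g t + h t) = fun t => prodOp l g t + prodOp l h t := by
  induction l generalizing g h with
  | nil => rfl
  | cons σ l ih =>
    have hg' : Differentiable ℝ g := hg.differentiable (by simp)
    have hh' : Differentiable ℝ h := hh.differentiable (by simp)
    have : Lop σ (fun t => g t + h t) = fun t => Lop σ g t + Lop σ h t := by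
      funext t
      simp only [Lop]
      rw [deriv_fun_add (hg' t) (hh' t)]; ring
    change prodOp l (Lop σ _) = fun t => prodOp l (Lop σ g) t + prodOp l (Lop σ h) t
    rw [this, ih (contDiff_Lop hg) (contDiff_Lop hh)]

lemma prodOp_shift (l : List ℝ) (h : ℝ → ℝ) (T t : ℝ) :
    prodOp l (fun s => h (T + s)) t = prodOp l h (T + t) := by
  induction l generalizing h with
  | nil => rfl
  | cons σ l ih =>
    have : Lop σ (fun s => h (T + s)) = fun s => Lop σ h (T + s) := by
      funext s
      simp only [Lop]
      rw [deriv_comp_const_add]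
    change prodOp l (Lop σ _) t = _
    rw [this]; exact ih _

/-- Products of first-order operators applied to `t ↦ a t * f (exp t)` are controlled at a point by
the derivatives of `f` there. With bound `0` this transfers Dirichlet conditions, and with a
positive bound it transfers bounds on initial data. -/
lemma prodOp_bound (l : List ℝ) (a : ℝ → ℝ) (ha : ContDiff ℝ (⊤ : ℕ∞) a) (t₀ : ℝ) :
    ∃ C : ℝ, 0 ≤ C ∧ ∀ f : ℝ → ℝ, ContDiff ℝ l.length f → ∀ A : ℝ,
      (∀ m ≤ l.length, |iteratedDeriv m f (exp t₀)| ≤ A) →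
      |prodOp l (fun t => a t * f (exp t)) t₀| ≤ C * A := by
  induction l generalizing a with
  | nil =>
    refine ⟨|a t₀|, abs_nonneg _, fun f _ A hA => ?_⟩
    have := hA 0 le_rfl
    rw [iteratedDeriv_zero] at this
    change |a t₀ * f (exp t₀)| ≤ _
    rw [abs_mul]
    gcongr
  | cons σ l ih =>
    have ha1 : ContDiff ℝ (⊤ : ℕ∞) (deriv a) := ((contDiff_infty_iff_deriv).1 ha).2
    obtain ⟨C₁, hC₁, h₁⟩ := ih (fun t => deriv a t - σ * a t) (ha1.sub (contDiff_const.mul ha))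
    obtain ⟨C₂, hC₂, h₂⟩ := ih (fun t => a t * exp t) (ha.mul Real.contDiff_exp)
    refine ⟨C₁ + C₂, by positivity, fun f hf A hA => ?_⟩
    have hfd : Differentiable ℝ f := hf.differentiable (by simp)
    have had : Differentiable ℝ a := ha.differentiable (by simp)
    have hf1 : ContDiff ℝ l.length (deriv f) := by
      have := (contDiff_succ_iff_deriv (n := (l.length : WithTop ℕ∞)) (f := f)).1
        (by exact_mod_cast hf)
      exact this.2.2
    have hf0 : ContDiff ℝ l.length f := hf.of_le (by exact_mod_cast Nat.le_succ _)
    have key : Lop σ (fun t => a t * f (exp t)) =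
        fun t => (deriv a t - σ * a t) * f (exp t) + (a t * exp t) * deriv f (exp t) := by
      funext t
      simp only [Lop]
      have h1 : HasDerivAt (fun t => f (exp t)) (deriv f (exp t) * exp t) t :=
        (hfd (exp t)).hasDerivAt.comp t (Real.hasDerivAt_exp t)
      have := ((had t).hasDerivAt.mul h1).deriv
      rw [show (fun t => a t * f (exp t)) = a * (fun t => f (exp t)) from rfl, this]
      ring
    change |prodOp l (Lop σ _) t₀| ≤ _
    have e0 : ContDiff ℝ l.length (fun t : ℝ => exp t) := Real.contDiff_exp
    have hal : ContDiff ℝ l.length a := ha.of_le (by exact_mod_cast le_top)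
    have hal1 : ContDiff ℝ l.length (deriv a) := ha1.of_le (by exact_mod_cast le_top)
    rw [key, prodOp_add l (g := fun t => (deriv a t - σ * a t) * f (exp t))
      (h := fun t => a t * exp t * deriv f (exp t)) ((hal1.sub (contDiff_const.mul hal)).mul (hf0.comp e0))
      ((hal.mul e0).mul (hf1.comp e0))]
    refine (abs_add_le _ _).trans ?_
    rw [add_mul]
    refine add_le_add (h₁ f hf0 A fun m hm => hA m (hm.trans (Nat.le_succ _)))
      (h₂ (deriv f) hf1 A fun m hm => ?_)
    rw [← iteratedDeriv_succ']
    exact hA (m + 1) (by simpa using hm)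

/-! ### Estimates for factored operators -/

lemma abs_sub_le_of_deriv_le {a c : ℝ} (hac : a ≤ c) {φ φ' b b' : ℝ → ℝ}
    (hφ : ∀ s ∈ Set.Icc a c, HasDerivAt φ (φ' s) s) (hb : ∀ s ∈ Set.Icc a c, HasDerivAt b (b' s) s)
    (h : ∀ s ∈ Set.Ioo a c, |φ' s| ≤ b' s) : |φ c - φ a| ≤ b c - b a := by
  have m1 : MonotoneOn (fun s => b s - φ s) (Set.Icc a c) := by
    refine monotoneOn_of_deriv_nonneg (convex_Icc a c)
      (fun s hs => ((hb s hs).sub (hφ s hs)).continuousAt.continuousWithinAt)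
      (fun s hs => ((hb s (interior_subset hs)).sub
        (hφ s (interior_subset hs))).differentiableAt.differentiableWithinAt) fun s hs => ?_
    rw [((hb s (interior_subset hs)).fun_sub (hφ s (interior_subset hs))).deriv]
    rw [interior_Icc] at hs
    have := (abs_le.1 (h s hs)).2
    linarith
  have m2 : MonotoneOn (fun s => b s + φ s) (Set.Icc a c) := by
    refine monotoneOn_of_deriv_nonneg (convex_Icc a c)
      (fun s hs => ((hb s hs).add (hφ s hs)).continuousAt.continuousWithinAt)
      (fun s hs => ((hb s (interior_subset hs)).add
        (hφ s (interior_subset hs))).differentiableAt.differentiableWithinAt) fun s hs => ?_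
    rw [((hb s (interior_subset hs)).fun_add (hφ s (interior_subset hs))).deriv]
    rw [interior_Icc] at hs
    have := (abs_le.1 (h s hs)).1
    linarith
  have e1 := m1 (Set.left_mem_Icc.2 hac) (Set.right_mem_Icc.2 hac) hac
  have e2 := m2 (Set.left_mem_Icc.2 hac) (Set.right_mem_Icc.2 hac) hac
  rw [abs_le]; constructor <;> linarith

lemma hasDerivAt_exp_mul (c s : ℝ) : HasDerivAt (fun s => exp (c * s)) (exp (c * s) * c) s := by
  have := ((hasDerivAt_id s).const_mul c).exp
  simpa using this

/-- The integrating factor of `D - σ`. -/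
lemma hasDerivAt_exp_mul_Lop (σ : ℝ) {W : ℝ → ℝ} (hW : Differentiable ℝ W) (s : ℝ) :
    HasDerivAt (fun s => exp (-σ * s) * W s) (exp (-σ * s) * Lop σ W s) s := by
  have := (hasDerivAt_exp_mul (-σ) s).mul (hW s).hasDerivAt
  refine this.congr_deriv ?_
  change _ = exp (-σ * s) * (deriv W s - σ * W s)
  ring

/-- The Duhamel bound for a decaying factor, with a general primitive `b` as majorant. -/
lemma forward_gen {γ S : ℝ} {W b b' : ℝ → ℝ} (hW : Differentiable ℝ W) {t : ℝ}
    (ht : t ∈ Set.Icc 0 S) (hb : ∀ s ∈ Set.Icc 0 t, HasDerivAt b (b' s) s)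
    (h : ∀ s ∈ Set.Ioo 0 t, exp (γ * s) * |Lop (-γ) W s| ≤ b' s) :
    |W t| ≤ exp (-γ * t) * (|W 0| + (b t - b 0)) := by
  have h1 := abs_sub_le_of_deriv_le ht.1 (fun s _ => hasDerivAt_exp_mul_Lop (-γ) hW s) hb
    (fun s hs => by
      rw [abs_mul, abs_of_pos (exp_pos _), neg_neg]; exact h s hs)
  simp only [neg_neg, mul_zero, exp_zero, one_mul] at h1
  have h2 : |exp (γ * t) * W t| ≤ |W 0| + (b t - b 0) := by
    have := abs_add_le (exp (γ * t) * W t - W 0) (W 0)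
    rw [sub_add_cancel] at this
    linarith
  rw [abs_mul, abs_of_pos (exp_pos _)] at h2
  calc |W t| = exp (-γ * t) * (exp (γ * t) * |W t|) := by
        rw [← mul_assoc, ← exp_add]; simp
    _ ≤ _ := by gcongr

/-- A decaying factor `D + σ`, integrated forwards from `0`, preserves any decay rate `α < σ`. -/
lemma forward {σ α B S : ℝ} (hσ : α < σ) (hB : 0 ≤ B) {W : ℝ → ℝ} (hW : Differentiable ℝ W)
    (h : ∀ t ∈ Set.Icc 0 S, |Lop (-σ) W t| ≤ B * exp (-α * t)) {t : ℝ} (ht : t ∈ Set.Icc 0 S) :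
    |W t| ≤ (|W 0| + B / (σ - α)) * exp (-α * t) := by
  have hd : 0 < σ - α := sub_pos.2 hσ
  have h1 := forward_gen (γ := σ) (b := fun s => B / (σ - α) * exp ((σ - α) * s))
    (b' := fun s => B / (σ - α) * (exp ((σ - α) * s) * (σ - α))) hW ht
    (fun s _ => (hasDerivAt_exp_mul (σ - α) s).const_mul _) (fun s hs => by
      have := h s ⟨hs.1.le, hs.2.le.trans ht.2⟩
      calc exp (σ * s) * |Lop (-σ) W s| ≤ exp (σ * s) * (B * exp (-α * s)) := by gcongr
        _ = B * exp ((σ - α) * s) := by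
          rw [show (σ - α) * s = σ * s + -α * s by ring, exp_add]; ring
        _ = _ := by field_simp)
  refine h1.trans ?_
  have e1 : exp (-σ * t) ≤ exp (-α * t) := exp_le_exp.2 (by nlinarith [ht.1])
  have e2 : exp (-σ * t) * exp ((σ - α) * t) = exp (-α * t) := by
    rw [← exp_add]; congr 1; ring
  have e3 : 0 ≤ B / (σ - α) := by positivity
  have e4 := mul_le_mul_of_nonneg_right e1 (abs_nonneg (W 0))
  have e5 := mul_nonneg (exp_pos (-σ * t)).le e3
  simp only [mul_zero, exp_zero, mul_one]
  calc _ = exp (-σ * t) * |W 0| + B / (σ - α) * (exp (-σ * t) * exp ((σ - α) * t))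
        - exp (-σ * t) * (B / (σ - α)) := by ring
    _ ≤ _ := by rw [e2]; linarith

/-- A growing factor `D - σ`, integrated backwards from a zero at `S`, preserves any decay rate
`α ≥ 0`. -/
lemma backward {σ α B S : ℝ} (hσ : 0 < σ) (hα : 0 ≤ α) (hB : 0 ≤ B) {W : ℝ → ℝ}
    (hW : Differentiable ℝ W) (hS : W S = 0)
    (h : ∀ t ∈ Set.Icc 0 S, |Lop σ W t| ≤ B * exp (-α * t)) {t : ℝ} (ht : t ∈ Set.Icc 0 S) :
    |W t| ≤ B / σ * exp (-α * t) := by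
  have hd : 0 < σ + α := by linarith
  have h1 := abs_sub_le_of_deriv_le ht.2 (fun s _ => hasDerivAt_exp_mul_Lop σ hW s)
    (b := fun s => -(B / (σ + α)) * exp (-(σ + α) * s))
    (b' := fun s => -(B / (σ + α)) * (exp (-(σ + α) * s) * (-(σ + α))))
    (fun s _ => (hasDerivAt_exp_mul (-(σ + α)) s).const_mul _) (fun s hs => by
      have := h s ⟨ht.1.trans hs.1.le, hs.2.le⟩
      rw [abs_mul, abs_of_pos (exp_pos _)]
      calc exp (-σ * s) * |Lop σ W s| ≤ exp (-σ * s) * (B * exp (-α * s)) := by gcongr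
        _ = B * exp (-(σ + α) * s) := by
          rw [show -(σ + α) * s = -σ * s + -α * s by ring, exp_add]; ring
        _ = _ := by field_simp)
  simp only [hS, mul_zero, zero_sub, abs_neg, abs_mul, abs_of_pos (exp_pos _)] at h1
  have e0 : 0 ≤ B / (σ + α) := by positivity
  have e1 : B / (σ + α) ≤ B / σ := by gcongr; linarith
  have e2 : 0 ≤ B / (σ + α) * exp (-(σ + α) * S) := by positivity
  calc |W t| = exp (σ * t) * (exp (-σ * t) * |W t|) := by
        rw [← mul_assoc, ← exp_add]; simp
    _ ≤ exp (σ * t) * (B / (σ + α) * exp (-(σ + α) * t)) := by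
        refine mul_le_mul_of_nonneg_left ?_ (exp_pos _).le
        linarith
    _ = B / (σ + α) * exp (-α * t) := by
        rw [show -α * t = σ * t + -(σ + α) * t by ring, exp_add]; ring
    _ ≤ _ := by gcongr

/-- Growing factors are integrated backwards from the Dirichlet end `S`, where all the
intermediate functions vanish. -/
lemma backward_list {γ α S : ℝ} (hγ : 0 < γ) (hα : 0 ≤ α) (l : List ℝ) (hl : ∀ σ ∈ l, γ ≤ σ)
    {B : ℝ} (hB : 0 ≤ B) {W : ℝ → ℝ} (hW : ContDiff ℝ l.length W)
    (hS : ∀ l' : List ℝ, l'.length < l.length → prodOp l' W S = 0)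
    (h : ∀ t ∈ Set.Icc 0 S, |prodOp l W t| ≤ B * exp (-α * t)) {t : ℝ} (ht : t ∈ Set.Icc 0 S) :
    |W t| ≤ B / γ ^ l.length * exp (-α * t) := by
  induction l generalizing W t with
  | nil => simpa [prodOp] using h t ht
  | cons σ l ih =>
    have hσ : γ ≤ σ := hl σ (by simp)
    have h1 : ∀ t ∈ Set.Icc 0 S, |Lop σ W t| ≤ B / γ ^ l.length * exp (-α * t) := fun t ht =>
      ih (fun τ hτ => hl τ (by simp [hτ])) (contDiff_Lop hW)
        (fun l' hl' => hS (σ :: l') (by simpa using hl')) h ht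
    refine (backward (hγ.trans_le hσ) hα (by positivity) (hW.differentiable (by simp))
      (hS [] (by simp)) h1 ht).trans ?_
    rw [List.length_cons, pow_succ, ← div_div]
    gcongr

/-- Decaying factors are integrated forwards from the end `0`, where the data are bounded by
`A`. -/
lemma forward_list {α S A : ℝ} (hA : 0 ≤ A) (l : List ℝ) (hl : ∀ σ ∈ l, α + 1 ≤ -σ)
    {B : ℝ} (hB : 0 ≤ B) {W : ℝ → ℝ} (hW : ContDiff ℝ l.length W)
    (h0 : ∀ l' : List ℝ, l' <+: l → |prodOp l' W 0| ≤ A)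
    (h : ∀ t ∈ Set.Icc 0 S, |prodOp l W t| ≤ B * exp (-α * t)) {t : ℝ} (ht : t ∈ Set.Icc 0 S) :
    |W t| ≤ (l.length * A + B) * exp (-α * t) := by
  induction l generalizing W t with
  | nil => simpa [prodOp] using h t ht
  | cons σ l ih =>
    have hσ : α + 1 ≤ -σ := hl σ (by simp)
    have h1 : ∀ t ∈ Set.Icc 0 S, |Lop (- -σ) W t| ≤ (l.length * A + B) * exp (-α * t) :=
      fun t ht => by
      rw [neg_neg]
      exact ih (fun τ hτ => hl τ (by simp [hτ])) (contDiff_Lop hW)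
        (fun l' hl' => h0 (σ :: l') (by simpa using hl')) h ht
    have hB' : 0 ≤ l.length * A + B := by positivity
    refine (forward (by linarith) hB' (hW.differentiable (by simp)) h1 ht).trans ?_
    have e1 : (l.length * A + B) / (-σ - α) ≤ l.length * A + B :=
      div_le_self hB' (by linarith)
    have e2 : |W 0| ≤ A := h0 [] (by simp)
    push_cast [List.length_cons]
    refine mul_le_mul_of_nonneg_right ?_ (exp_pos _).le
    linarith

/-- The a priori estimate for `∏ (D - σ)` over `P ++ N`, where `P` contains growing exponents and
`N` decaying ones, with Dirichlet conditions at `S` and bounded data at `0`. -/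
lemma linear_estimate {γ α S A : ℝ} (hγ : 0 < γ) (hα : 0 ≤ α) (hαγ : α ≤ γ) (hA : 0 ≤ A)
    {P N : List ℝ} (hP : ∀ σ ∈ P, γ ≤ σ) (hN : ∀ σ ∈ N, γ + 1 ≤ -σ) {W : ℝ → ℝ}
    (hW : ContDiff ℝ ((N.length + P.length : ℕ) : WithTop ℕ∞) W)
    (h0 : ∀ l' : List ℝ, l' <+: P ++ N → |prodOp l' W 0| ≤ A)
    (hS : ∀ l' : List ℝ, l'.length < P.length → prodOp l' W S = 0) {B : ℝ} (hB : 0 ≤ B)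
    (h : ∀ t ∈ Set.Icc 0 S, |prodOp (P ++ N) W t| ≤ B * exp (-α * t)) {t : ℝ}
    (ht : t ∈ Set.Icc 0 S) :
    |W t| ≤ (N.length * A + B) / γ ^ P.length * exp (-α * t) := by
  refine backward_list hγ hα P hP (by positivity)
    (hW.of_le (by exact_mod_cast Nat.le_add_left _ _)) hS (fun s hs => ?_) ht
  refine forward_list hA N (fun σ hσ => by linarith [hN σ hσ]) hB (contDiff_prodOp P hW)
    (fun l' hl' => ?_) (fun r hr => ?_) hs
  · rw [← prodOp_append]
    exact h0 _ ((List.prefix_append_right_inj P).2 hl')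
  · rw [← prodOp_append]; exact h r hr

/-- The optimal constant in `|W t| ≤ N * exp (-α * t)` on `[0, S]` is attained. Estimating `W` at a
point of attainment lets small multiples of `N` be absorbed. -/
lemma exists_weighted_max {S α : ℝ} (hS : 0 ≤ S) {W : ℝ → ℝ} (hW : Continuous W) :
    ∃ N : ℝ, 0 ≤ N ∧ (∀ t ∈ Set.Icc 0 S, |W t| ≤ N * exp (-α * t)) ∧
      ∃ t ∈ Set.Icc 0 S, |W t| = N * exp (-α * t) := by
  have hc : Continuous fun t => |W t| * exp (α * t) := by fun_prop
  obtain ⟨t, ht, hmax⟩ := isCompact_Icc.exists_isMaxOn (Set.nonempty_Icc.2 hS) hc.continuousOn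
  have e : ∀ s, |W s| = |W s| * exp (α * s) * exp (-α * s) := fun s => by
    rw [mul_assoc, ← exp_add]; simp
  refine ⟨|W t| * exp (α * t), by positivity, fun s hs => ?_, t, ht, e t⟩
  rw [e s]
  exact mul_le_mul_of_nonneg_right (hmax hs) (exp_pos _).le

/-- Uniform bound from the energy `∫ |W| ^ (p + 1)`; the inequality
`x + x ^ p ≤ 2 + 2 * x ^ (p + 1)` replaces Hölder's inequality. -/
lemma bounded_of_energy {γ S A p M : ℝ} (hγ : 0 < γ) (hA : 0 ≤ A) (hp : 1 < p) (hM : 0 ≤ M)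
    {P N : List ℝ} (hP : ∀ σ ∈ P, γ ≤ σ) (hN : ∀ σ ∈ N, γ + 1 ≤ -σ) {W : ℝ → ℝ}
    (hW : ContDiff ℝ ((1 + N.length + P.length : ℕ) : WithTop ℕ∞) W)
    (h0 : ∀ l' : List ℝ, l' <+: P ++ N → |prodOp l' W 0| ≤ A)
    (hS : ∀ l' : List ℝ, l'.length < P.length → prodOp l' W S = 0)
    (hE : ∀ t ∈ Set.Icc 0 S, ∫ s in (0 : ℝ)..t, |W s| ^ (p + 1) ≤ M)
    (h : ∀ t ∈ Set.Ioo 0 S, |Lop (-γ) (prodOp (P ++ N) W) t| ≤ |W t| + |W t| ^ p)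
    {t : ℝ} (ht : t ∈ Set.Icc 0 S) :
    |W t| ≤ (N.length * A + (A + 2 / γ + 2 * M)) / γ ^ P.length := by
  have hWc : Continuous W := hW.continuous
  have hint : Continuous fun s => |W s| ^ (p + 1) :=
    hWc.abs.rpow_const fun _ => Or.inr (by linarith)
  have hz : ContDiff ℝ 1 (prodOp (P ++ N) W) := by
    refine contDiff_prodOp (m := 1) (P ++ N) (hW.of_le ?_)
    rw [List.length_append]; exact_mod_cast (by omega)
  have key := linear_estimate (α := 0) (B := A + 2 / γ + 2 * M) hγ le_rfl hγ.le hA hP hN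
    (hW.of_le (by exact_mod_cast (by omega))) h0 hS (by positivity) (fun t ht => ?_) ht
  · simpa using key
  -- The last factor `D + γ` is integrated directly; `exp (γ s) ≤ exp (γ t)` in front of the energy
  -- density.
  have h1 := forward_gen (γ := γ) (S := S)
    (b := fun s => 2 / γ * exp (γ * s) + 2 * exp (γ * t) * ∫ r in (0 : ℝ)..s, |W r| ^ (p + 1))
    (b' := fun s => 2 / γ * (exp (γ * s) * γ) + 2 * exp (γ * t) * |W s| ^ (p + 1))
    (hz.differentiable (by norm_num)) ht
    (fun s _ => ((hasDerivAt_exp_mul γ s).const_mul _).add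
      ((intervalIntegral.integral_hasDerivAt_right (hint.intervalIntegrable _ _)
        (hint.stronglyMeasurableAtFilter _ _) hint.continuousAt).const_mul _)) (fun s hs => by
      have e1 := h s ⟨hs.1, hs.2.trans_le ht.2⟩
      have e2 : |W s| + |W s| ^ p ≤ 2 + 2 * |W s| ^ (p + 1) := by
        have hx := abs_nonneg (W s)
        rcases le_total (|W s|) 1 with hx1 | hx1
        · have := rpow_le_one hx hx1 (by linarith : 0 ≤ p)
          have := rpow_nonneg hx (p + 1)
          linarith
        · have a1 := rpow_le_rpow_of_exponent_le hx1 (by linarith : p ≤ p + 1)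
          have a2 := rpow_le_rpow_of_exponent_le hx1 (by linarith : 1 ≤ p + 1)
          rw [rpow_one] at a2
          linarith
      have e3 : exp (γ * s) ≤ exp (γ * t) := exp_le_exp.2 (by nlinarith [hs.2])
      have e4 : (0 : ℝ) ≤ 2 * |W s| ^ (p + 1) := by positivity
      calc exp (γ * s) * |Lop (-γ) (prodOp (P ++ N) W) s|
          ≤ exp (γ * s) * (2 + 2 * |W s| ^ (p + 1)) := by gcongr; linarith
        _ = 2 * exp (γ * s) + exp (γ * s) * (2 * |W s| ^ (p + 1)) := by ring
        _ ≤ 2 * exp (γ * s) + exp (γ * t) * (2 * |W s| ^ (p + 1)) := by gcongr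
        _ = _ := by field_simp)
  refine h1.trans ?_
  simp only [mul_zero, exp_zero, intervalIntegral.integral_same, mul_one, add_zero, neg_zero,
    zero_mul]
  have e1 : |prodOp (P ++ N) W 0| ≤ A := h0 _ List.prefix_rfl
  have e2 := hE t ht
  have e3 : exp (-γ * t) ≤ 1 := by
    rw [exp_le_one_iff]; nlinarith [ht.1]
  have e4 : exp (-γ * t) * exp (γ * t) = 1 := by rw [← exp_add]; simp
  have e5 : 0 ≤ 2 / γ := by positivity
  have e6 := exp_pos (-γ * t)
  set I := ∫ r in (0 : ℝ)..t, |W r| ^ (p + 1)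
  set z := |prodOp (P ++ N) W 0|
  have e7 : exp (-γ * t) * z ≤ A :=
    (mul_le_of_le_one_left (abs_nonneg _) e3).trans e1
  calc _ = exp (-γ * t) * z + 2 / γ * (exp (-γ * t) * exp (γ * t))
        + 2 * (exp (-γ * t) * exp (γ * t)) * I - exp (-γ * t) * (2 / γ) := by ring
    _ ≤ _ := by
      rw [e4]
      have := mul_nonneg e6.le e5
      linarith

/-! ### Decay of small solutions -/

/-- Decay at any rate `α < γ` when the potential is small: hypothesis `hη` allows the contribution of
the potential, which is proportional to the optimal constant, to be absorbed. -/
lemma decay_subcritical {γ α S A η : ℝ} (hγ : 0 < γ) (hα : 0 ≤ α) (hαγ : α < γ) (hA : 0 ≤ A)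
    (hS0 : 0 ≤ S) (hη0 : 0 ≤ η)
    {P N : List ℝ} (hP : ∀ σ ∈ P, γ ≤ σ) (hN : ∀ σ ∈ N, γ + 1 ≤ -σ) {W : ℝ → ℝ}
    (hW : ContDiff ℝ ((1 + N.length + P.length : ℕ) : WithTop ℕ∞) W)
    (h0 : ∀ l' : List ℝ, l' <+: P ++ N → |prodOp l' W 0| ≤ A)
    (hS : ∀ l' : List ℝ, l'.length < P.length → prodOp l' W S = 0)
    (hη : η / (γ - α) / γ ^ P.length ≤ 1 / 2)
    (h : ∀ t ∈ Set.Ioo 0 S, |Lop (-γ) (prodOp (P ++ N) W) t| ≤ η * |W t|)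
    {t : ℝ} (ht : t ∈ Set.Icc 0 S) :
    |W t| ≤ (2 * ((N.length + 1) * A / γ ^ P.length)) * exp (-α * t) := by
  have hd : 0 < γ - α := sub_pos.2 hαγ
  obtain ⟨K, hK0, hK, t₁, ht₁, hKt⟩ := exists_weighted_max (α := α) hS0 hW.continuous
  have hz : ContDiff ℝ 1 (prodOp (P ++ N) W) := by
    refine contDiff_prodOp (m := 1) (P ++ N) (hW.of_le ?_)
    rw [List.length_append]; exact_mod_cast (by omega)
  have hz0 : |prodOp (P ++ N) W 0| ≤ A := h0 _ List.prefix_rfl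
  have key := linear_estimate (B := A + η * K / (γ - α)) hγ hα hαγ.le hA hP hN
    (hW.of_le (by exact_mod_cast (by omega))) h0 hS (by positivity) (fun t ht => ?_) ht₁
  · rw [hKt] at key
    have key2 := le_of_mul_le_mul_right key (exp_pos _)
    have e1 : (N.length * A + (A + η * K / (γ - α))) / γ ^ P.length
        = (N.length + 1) * A / γ ^ P.length + η / (γ - α) / γ ^ P.length * K := by
      field_simp
      ring
    rw [e1] at key2
    have e2 := mul_le_mul_of_nonneg_right hη hK0
    refine (hK t ht).trans ?_
    refine mul_le_mul_of_nonneg_right ?_ (exp_pos _).le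
    linarith
  · have h1 := forward_gen (γ := γ) (S := S)
      (b := fun s => η * K / (γ - α) * exp ((γ - α) * s))
      (b' := fun s => η * K / (γ - α) * (exp ((γ - α) * s) * (γ - α)))
      (hz.differentiable (by norm_num)) ht
      (fun s _ => (hasDerivAt_exp_mul (γ - α) s).const_mul _) (fun s hs => by
        have e1 := h s ⟨hs.1, hs.2.trans_le ht.2⟩
        have e2 := hK s ⟨hs.1.le, hs.2.le.trans ht.2⟩
        calc exp (γ * s) * |Lop (-γ) (prodOp (P ++ N) W) s|
            ≤ exp (γ * s) * (η * (K * exp (-α * s))) := by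
              refine mul_le_mul_of_nonneg_left (e1.trans ?_) (exp_pos _).le
              gcongr
          _ = η * K * exp ((γ - α) * s) := by
            rw [show (γ - α) * s = γ * s + -α * s by ring, exp_add]; ring
          _ = _ := by field_simp)
    refine h1.trans ?_
    have e1 : exp (-γ * t) ≤ exp (-α * t) := exp_le_exp.2 (by nlinarith [ht.1])
    have e2 : exp (-γ * t) * exp ((γ - α) * t) = exp (-α * t) := by
      rw [← exp_add]; congr 1; ring
    have e3 : 0 ≤ η * K / (γ - α) := by positivity
    have e4 := mul_le_mul_of_nonneg_right e1 (abs_nonneg (prodOp (P ++ N) W 0))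
    have e5 := mul_nonneg (exp_pos (-γ * t)).le e3
    have e6 := mul_le_mul_of_nonneg_left hz0 (exp_pos (-α * t)).le
    simp only [mul_zero, exp_zero, mul_one]
    calc _ = exp (-γ * t) * |prodOp (P ++ N) W 0|
          + η * K / (γ - α) * (exp (-γ * t) * exp ((γ - α) * t))
          - exp (-γ * t) * (η * K / (γ - α)) := by ring
      _ ≤ _ := by rw [e2]; linarith

/-- Decay at the critical rate `γ`, once the nonlinearity decays faster than `exp (-γ t)` and the
linear potential is at most `lam * exp (κ * (t - S))`, whose integral over `[0, S]` is small
uniformly in `S`. -/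
lemma decay_critical {γ β S A B lam κ : ℝ} (hγ : 0 < γ) (hβ : γ < β) (hA : 0 ≤ A) (hB : 0 ≤ B)
    (hS0 : 0 ≤ S) (hκ : 0 < κ) (hlam : 0 ≤ lam)
    {P N : List ℝ} (hP : ∀ σ ∈ P, γ ≤ σ) (hN : ∀ σ ∈ N, γ + 1 ≤ -σ) {W : ℝ → ℝ}
    (hW : ContDiff ℝ ((1 + N.length + P.length : ℕ) : WithTop ℕ∞) W)
    (h0 : ∀ l' : List ℝ, l' <+: P ++ N → |prodOp l' W 0| ≤ A)
    (hS : ∀ l' : List ℝ, l'.length < P.length → prodOp l' W S = 0)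
    (hη : lam / κ / γ ^ P.length ≤ 1 / 2)
    (h : ∀ t ∈ Set.Ioo 0 S, |Lop (-γ) (prodOp (P ++ N) W) t| ≤
      lam * exp (κ * (t - S)) * |W t| + B * exp (-β * t))
    {t : ℝ} (ht : t ∈ Set.Icc 0 S) :
    |W t| ≤ (2 * (((N.length + 1) * A + B / (β - γ)) / γ ^ P.length)) * exp (-γ * t) := by
  have hd : 0 < β - γ := sub_pos.2 hβ
  obtain ⟨K, hK0, hK, t₁, ht₁, hKt⟩ := exists_weighted_max (α := γ) hS0 hW.continuous
  have hz : ContDiff ℝ 1 (prodOp (P ++ N) W) := by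
    refine contDiff_prodOp (m := 1) (P ++ N) (hW.of_le ?_)
    rw [List.length_append]; exact_mod_cast (by omega)
  have hz0 : |prodOp (P ++ N) W 0| ≤ A := h0 _ List.prefix_rfl
  have key := linear_estimate (B := A + lam * K / κ + B / (β - γ)) hγ hγ.le le_rfl hA hP hN
    (hW.of_le (by exact_mod_cast (by omega))) h0 hS (by positivity) (fun t ht => ?_) ht₁
  · rw [hKt] at key
    have key2 := le_of_mul_le_mul_right key (exp_pos _)
    have e1 : (N.length * A + (A + lam * K / κ + B / (β - γ))) / γ ^ P.length
        = ((N.length + 1) * A + B / (β - γ)) / γ ^ P.length + lam / κ / γ ^ P.length * K := by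
      field_simp
      ring
    rw [e1] at key2
    have e2 := mul_le_mul_of_nonneg_right hη hK0
    refine (hK t ht).trans ?_
    refine mul_le_mul_of_nonneg_right ?_ (exp_pos _).le
    linarith
  · have hder : ∀ s : ℝ, HasDerivAt (fun s => exp (κ * (s - S))) (exp (κ * (s - S)) * κ) s := by
      intro s
      have := (((hasDerivAt_id s).sub_const S).const_mul κ).exp
      simpa using this
    have h1 := forward_gen (γ := γ) (S := S)
      (b := fun s => lam * K / κ * exp (κ * (s - S)) + -(B / (β - γ)) * exp (-(β - γ) * s))
      (b' := fun s => lam * K / κ * (exp (κ * (s - S)) * κ)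
        + -(B / (β - γ)) * (exp (-(β - γ) * s) * -(β - γ)))
      (hz.differentiable (by norm_num)) ht
      (fun s _ => ((hder s).const_mul _).add
        ((hasDerivAt_exp_mul (-(β - γ)) s).const_mul _)) (fun s hs => by
        have e1 := h s ⟨hs.1, hs.2.trans_le ht.2⟩
        have e2 := hK s ⟨hs.1.le, hs.2.le.trans ht.2⟩
        calc exp (γ * s) * |Lop (-γ) (prodOp (P ++ N) W) s|
            ≤ exp (γ * s) * (lam * exp (κ * (s - S)) * (K * exp (-γ * s))
              + B * exp (-β * s)) := by
              refine mul_le_mul_of_nonneg_left (e1.trans ?_) (exp_pos _).le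
              gcongr
          _ = lam * K * exp (κ * (s - S)) * (exp (γ * s) * exp (-γ * s))
              + B * (exp (γ * s) * exp (-β * s)) := by ring
          _ = lam * K * exp (κ * (s - S)) + B * exp (-(β - γ) * s) := by
            rw [← exp_add, ← exp_add, show γ * s + -γ * s = 0 by ring,
              show γ * s + -β * s = -(β - γ) * s by ring, exp_zero, mul_one]
          _ = _ := by field_simp)
    refine h1.trans ?_
    rw [mul_comm]
    refine mul_le_mul_of_nonneg_right ?_ (exp_pos _).le
    have e1 : exp (κ * (t - S)) ≤ 1 := by
      rw [exp_le_one_iff]; nlinarith [ht.2]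
    have e2 : 0 ≤ lam * K / κ := by positivity
    have e3 : 0 ≤ B / (β - γ) := by positivity
    have e4 := mul_le_mul_of_nonneg_left e1 e2
    have e5 := mul_nonneg e2 (exp_pos (κ * (0 - S))).le
    have e6 := mul_nonneg e3 (exp_pos (-(β - γ) * t)).le
    simp only [mul_zero, exp_zero, mul_one] at e4 ⊢
    linarith

/-- The decay estimate for small solutions of the Emden-Fowler equation on `[0, S]`. The smallness
thresholds depend on the operator only, and the constant on the data as well, but neither depends
on `S`. -/
lemma decay_main {γ p κ : ℝ} (hγ : 0 < γ) (hp : 1 < p) (hκ : 0 < κ) {P N : List ℝ}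
    (hP : ∀ σ ∈ P, γ ≤ σ) (hN : ∀ σ ∈ N, γ + 1 ≤ -σ) :
    ∃ η : ℝ, 0 < η ∧ ∀ A : ℝ, 0 ≤ A → ∃ C : ℝ, 0 ≤ C ∧ ∀ (S lam : ℝ) (W : ℝ → ℝ),
      0 ≤ S → 0 ≤ lam → lam ≤ η →
      ContDiff ℝ ((1 + N.length + P.length : ℕ) : WithTop ℕ∞) W →
      (∀ l' : List ℝ, l' <+: P ++ N → |prodOp l' W 0| ≤ A) →
      (∀ l' : List ℝ, l'.length < P.length → prodOp l' W S = 0) →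
      (∀ t ∈ Set.Ioo 0 S, |W t| ^ (p - 1) ≤ η) →
      (∀ t ∈ Set.Ioo 0 S, |Lop (-γ) (prodOp (P ++ N) W) t| ≤
        lam * exp (κ * (t - S)) * |W t| + |W t| ^ p) →
      ∀ t ∈ Set.Icc 0 S, |W t| ≤ C * exp (-γ * t) := by
  -- The intermediate rate satisfies `α < γ < α * p`.
  set α := γ * (1 + 1 / p) / 2 with hαdef
  have hp0 : 0 < p := by linarith
  have hα : 0 ≤ α := by positivity
  have hip : 1 / p < 1 := by rw [div_lt_one hp0]; exact hp
  have hαγ : α < γ := by rw [hαdef]; nlinarith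
  have hβ : γ < α * p := by
    rw [hαdef, show γ * (1 + 1 / p) / 2 * p = γ * (p + 1) / 2 by field_simp]
    nlinarith
  have hd : 0 < γ - α := sub_pos.2 hαγ
  set η := min ((γ - α) * γ ^ P.length / 4) (κ * γ ^ P.length / 2)
  have hη0 : 0 < η := lt_min (by positivity) (by positivity)
  have hη1 : η ≤ (γ - α) * γ ^ P.length / 4 := min_le_left _ _
  have hη2 : η ≤ κ * γ ^ P.length / 2 := min_le_right _ _
  refine ⟨η, hη0, fun A hA => ?_⟩
  set N₁ := 2 * ((N.length + 1) * A / γ ^ P.length) with hN₁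
  have hN₁0 : 0 ≤ N₁ := by positivity
  have hd' : 0 < α * p - γ := sub_pos.2 hβ
  refine ⟨2 * (((N.length + 1) * A + N₁ ^ p / (α * p - γ)) / γ ^ P.length), by positivity, ?_⟩
  intro S lam W hS0 hlam hlamη hW h0 hS hsm h t ht
  have hexp : ∀ t ∈ Set.Ioo 0 S, exp (κ * (t - S)) ≤ 1 := fun t ht => by
    rw [exp_le_one_iff]; nlinarith [ht.2]
  -- Both terms on the right are at most `η |W|`, so `W` decays at the rate `α`; then `|W| ^ p` decays
  -- at the rate `α * p > γ`.
  have h1 : ∀ t ∈ Set.Icc 0 S, |W t| ≤ N₁ * exp (-α * t) := fun t ht => by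
    refine decay_subcritical (η := 2 * η) hγ hα hαγ hA hS0 (by positivity) hP hN hW h0 hS ?_
      (fun s hs => (h s hs).trans ?_) ht
    · rw [div_div, div_le_iff₀ (by positivity)]; linarith
    · have e1 : |W s| ^ p = |W s| ^ (p - 1) * |W s| := by
        have := rpow_add_one' (abs_nonneg (W s)) (y := p - 1) (by linarith)
        rwa [sub_add_cancel] at this
      have e2 : lam * exp (κ * (s - S)) ≤ η :=
        (mul_le_of_le_one_right hlam (hexp s hs)).trans hlamη
      rw [e1, ← add_mul]
      refine mul_le_mul_of_nonneg_right ?_ (abs_nonneg _)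
      have := hsm s hs
      linarith
  refine decay_critical hγ hβ hA (by positivity) hS0 hκ hlam hP hN hW h0 hS ?_
    (fun s hs => (h s hs).trans ?_) ht
  · rw [div_div, div_le_iff₀ (by positivity)]; linarith
  · have e1 := rpow_le_rpow (abs_nonneg _) (h1 s ⟨hs.1.le, hs.2.le⟩) hp0.le
    rw [mul_rpow hN₁0 (exp_pos _).le, ← exp_mul] at e1
    rw [show -(α * p) * s = -α * s * p by ring]
    linarith

/-! ### The Laplacian of radial functions -/

/-- The restriction of a function to the ray spanned by `e`, in logarithmic coordinates. -/
def rayLog {n : ℕ} (e : EuclideanSpace ℝ (Fin n)) (g : EuclideanSpace ℝ (Fin n) → ℝ) : ℝ → ℝ :=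
  fun t => g (exp t • e)

lemma contDiff_rayLog {n : ℕ} {m : WithTop ℕ∞} (e : EuclideanSpace ℝ (Fin n))
    {g : EuclideanSpace ℝ (Fin n) → ℝ} (hg : ContDiff ℝ m g) :
    ContDiff ℝ m (rayLog e g) :=
  hg.comp (Real.contDiff_exp.smul contDiff_const)

lemma radial_eq_rayLog {n : ℕ} {e : EuclideanSpace ℝ (Fin n)} (he : ‖e‖ = 1)
    {g : EuclideanSpace ℝ (Fin n) → ℝ} (hrad : ∀ x y, ‖x‖ = ‖y‖ → g x = g y)
    {x : EuclideanSpace ℝ (Fin n)} (hx : x ≠ 0) : g x = rayLog e g (log ‖x‖) := by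
  refine hrad _ _ ?_
  rw [norm_smul, he, mul_one, exp_log (norm_pos_iff.2 hx), norm_norm]

lemma hasDerivAt_line {n : ℕ} {F : Type*} [NormedAddCommGroup F] [NormedSpace ℝ F]
    {g : EuclideanSpace ℝ (Fin n) → F} (hg : Differentiable ℝ g)
    (x v : EuclideanSpace ℝ (Fin n)) (s : ℝ) :
    HasDerivAt (fun s : ℝ => g (x + s • v)) (fderiv ℝ g (x + s • v) v) s := by
  have h1 : HasDerivAt (fun s : ℝ => x + s • v) v s := by
    simpa using ((hasDerivAt_id s).smul_const v).const_add x
  exact (hg _).hasFDerivAt.comp_hasDerivAt s h1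

lemma second_deriv_line {n : ℕ} {g : EuclideanSpace ℝ (Fin n) → ℝ} (hg : ContDiff ℝ 2 g)
    (x v : EuclideanSpace ℝ (Fin n)) :
    iteratedFDeriv ℝ 2 g x (fun _ => v) = deriv (deriv fun s : ℝ => g (x + s • v)) 0 := by
  rw [iteratedFDeriv_two_apply]
  have h1 : (deriv fun s : ℝ => g (x + s • v)) = fun s => fderiv ℝ g (x + s • v) v := by
    funext s
    exact (hasDerivAt_line (hg.differentiable (by norm_num)) x v s).deriv
  have h2 : Differentiable ℝ (fderiv ℝ g) :=
    (hg.fderiv_right (m := 1) (by norm_num)).differentiable (by norm_num)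
  rw [h1]
  have h3 := (hasDerivAt_line h2 x v 0)
  simp only [zero_smul, add_zero] at h3
  have h4 : HasDerivAt (fun s : ℝ => fderiv ℝ g (x + s • v) v) (fderiv ℝ (fderiv ℝ g) x v v) 0 := by
    simpa using h3.clm_apply (hasDerivAt_const (0 : ℝ) v)
  exact h4.deriv.symm

/-- The second directional derivative of a radial function, from the fact that `‖x + s • v‖ ^ 2` is a
quadratic polynomial in `s`. -/
lemma radial_second_deriv {n : ℕ} {e : EuclideanSpace ℝ (Fin n)} (he : ‖e‖ = 1)
    {g : EuclideanSpace ℝ (Fin n) → ℝ} (hg : ContDiff ℝ 2 g)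
    (hrad : ∀ x y, ‖x‖ = ‖y‖ → g x = g y) {x v : EuclideanSpace ℝ (Fin n)} (hx : x ≠ 0)
    (hv : ‖v‖ = 1) :
    iteratedFDeriv ℝ 2 g x (fun _ => v) =
      deriv (deriv (rayLog e g)) (log ‖x‖) * (inner ℝ x v) ^ 2 / ‖x‖ ^ 4
      + deriv (rayLog e g) (log ‖x‖) * (1 / ‖x‖ ^ 2 - 2 * (inner ℝ x v) ^ 2 / ‖x‖ ^ 4) := by
  rw [second_deriv_line hg]
  set c : ℝ := inner ℝ x v with hc
  set G := rayLog e g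
  have hG : ContDiff ℝ 2 G := contDiff_rayLog e hg
  have hG1 : Differentiable ℝ G := hG.differentiable (by norm_num)
  have hG2 : Differentiable ℝ (deriv G) := by
    have := (contDiff_succ_iff_deriv (n := 1) (f := G)).1 (by exact_mod_cast hG)
    exact this.2.2.differentiable (by norm_num)
  have hr : 0 < ‖x‖ := norm_pos_iff.2 hx
  set Q : ℝ → ℝ := fun s => ‖x‖ ^ 2 + 2 * c * s + s ^ 2 with hQ
  have hQn : ∀ s : ℝ, ‖x + s • v‖ ^ 2 = Q s := by
    intro s
    rw [norm_add_sq_real, inner_smul_right, norm_smul, hv, mul_one, norm_eq_abs, sq_abs]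
    simp only [hQ]; ring
  have hQd : ∀ s, HasDerivAt Q (2 * (c + s)) s := by
    intro s
    have := (((hasDerivAt_id s).const_mul (2 * c)).const_add (‖x‖ ^ 2)).add
      ((hasDerivAt_id s).pow 2)
    refine (this.congr_deriv ?_).congr_of_eventuallyEq (Eventually.of_forall fun s => ?_)
    · simp; ring
    · simp [hQ]
  have hQ0 : Q 0 = ‖x‖ ^ 2 := by simp [hQ]
  have hQpos : ∀ᶠ s in 𝓝 (0 : ℝ), 0 < Q s := by
    refine (hQd 0).continuousAt.eventually (lt_mem_nhds ?_)
    rw [hQ0]; positivity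
  have hLd : ∀ s, 0 < Q s → HasDerivAt (fun s => log (Q s) / 2) ((c + s) / Q s) s := by
    intro s hs
    have := ((hQd s).log hs.ne').div_const 2
    refine this.congr_deriv ?_
    field_simp
  have hL0 : log (Q 0) / 2 = log ‖x‖ := by
    rw [hQ0, log_pow]; push_cast; ring
  have hgG : ∀ s, 0 < Q s → g (x + s • v) = G (log (Q s) / 2) := by
    intro s hs
    have hne : x + s • v ≠ 0 := by
      intro h0
      have := hQn s
      rw [h0] at this
      simp at this
      linarith
    rw [radial_eq_rayLog he hrad hne, ← hQn s, log_pow]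
    congr 1
    push_cast; ring
  have hfirst : ∀ s, 0 < Q s → HasDerivAt (fun s : ℝ => G (log (Q s) / 2))
      (deriv G (log (Q s) / 2) * ((c + s) / Q s)) s := fun s hs =>
    (hG1 _).hasDerivAt.comp s (hLd s hs)
  have e1 : (fun s : ℝ => g (x + s • v)) =ᶠ[𝓝 0] fun s => G (log (Q s) / 2) := by
    filter_upwards [hQpos] with s hs using hgG s hs
  have e2 : deriv (fun s : ℝ => g (x + s • v)) =ᶠ[𝓝 0]
      fun s => deriv G (log (Q s) / 2) * ((c + s) / Q s) := by
    refine e1.deriv.trans ?_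
    filter_upwards [hQpos] with s hs using (hfirst s hs).deriv
  rw [e2.deriv_eq]
  have hQ0pos : 0 < Q 0 := by rw [hQ0]; positivity
  have d1 : HasDerivAt (fun s => deriv G (log (Q s) / 2))
      (deriv (deriv G) (log (Q 0) / 2) * ((c + 0) / Q 0)) 0 :=
    ((hG2 _).hasDerivAt).comp (0 : ℝ) (hLd 0 hQ0pos)
  have d2 := ((hasDerivAt_id (0 : ℝ)).const_add c).div (hQd 0) hQ0pos.ne'
  have d3 := (d1.mul d2).deriv
  refine Eq.trans d3 ?_
  simp only [Pi.div_apply, id, hL0, add_zero]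
  simp only [hQ0]
  field_simp

/-- With `r = exp t`, the Laplacian of a radial function is `exp (-2 t) (D² + (n - 2) D)`. -/
lemma lap_radial {n : ℕ} {e : EuclideanSpace ℝ (Fin n)} (he : ‖e‖ = 1)
    {g : EuclideanSpace ℝ (Fin n) → ℝ} (hg : ContDiff ℝ 2 g)
    (hrad : ∀ x y, ‖x‖ = ‖y‖ → g x = g y) {x : EuclideanSpace ℝ (Fin n)} (hx : x ≠ 0) :
    lap g x = (deriv (deriv (rayLog e g)) (log ‖x‖)
      + ((n : ℝ) - 2) * deriv (rayLog e g) (log ‖x‖)) / ‖x‖ ^ 2 := by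
  have hr : 0 < ‖x‖ := norm_pos_iff.2 hx
  have hsum : ∑ i : Fin n, (x i) ^ 2 = ‖x‖ ^ 2 := (EuclideanSpace.real_norm_sq_eq x).symm
  have h1 : ∀ i : Fin n, inner ℝ x (EuclideanSpace.single i (1 : ℝ)) = x i := fun i => by
    simp [EuclideanSpace.inner_single_right]
  unfold lap
  rw [Finset.sum_congr rfl fun i _ =>
    radial_second_deriv he hg hrad hx (v := EuclideanSpace.single i (1 : ℝ)) (by simp)]
  simp only [h1, Finset.sum_add_distrib, ← Finset.mul_sum, ← Finset.sum_div,
    Finset.sum_sub_distrib, hsum, Finset.sum_const, Finset.card_univ, Fintype.card_fin,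
    nsmul_eq_mul]
  field_simp

lemma lap_radial_radial {n : ℕ} {e : EuclideanSpace ℝ (Fin n)} (he : ‖e‖ = 1)
    {g : EuclideanSpace ℝ (Fin n) → ℝ} (hg : ContDiff ℝ 2 g)
    (hrad : ∀ x y, ‖x‖ = ‖y‖ → g x = g y) : ∀ x y, ‖x‖ = ‖y‖ → lap g x = lap g y := by
  intro x y hxy
  by_cases hx : x = 0
  · have : y = 0 := by
      rw [hx, norm_zero] at hxy
      exact norm_eq_zero.1 hxy.symm
    rw [hx, this]
  · have hy : y ≠ 0 := by
      rw [← norm_pos_iff, ← hxy]; exact norm_pos_iff.2 hx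
    rw [lap_radial he hg hrad hx, lap_radial he hg hrad hy, hxy]

lemma contDiff_lap {n m : ℕ} {g : EuclideanSpace ℝ (Fin n) → ℝ}
    (hg : ContDiff ℝ ((m + 2 : ℕ) : WithTop ℕ∞) g) : ContDiff ℝ m (lap g) := by
  unfold lap
  refine ContDiff.sum fun i _ => ?_
  have h1 : ContDiff ℝ m (iteratedFDeriv ℝ 2 g) :=
    hg.iteratedFDeriv_right (by exact_mod_cast le_rfl)
  exact (ContinuousMultilinearMap.apply ℝ (fun _ : Fin 2 => EuclideanSpace ℝ (Fin n)) ℝ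
    (fun _ => EuclideanSpace.single i 1)).contDiff.comp h1

/-! ### Emden-Fowler coordinates -/

/-- The exponents `γ, γ + 2, …, γ + 2 (j - 1)`. -/
def posExp (γ : ℝ) (j : ℕ) : List ℝ := (List.range j).map fun i : ℕ => γ + 2 * (i : ℝ)

/-- The exponents `-(γ + 2 (k - 1 - i))` for `i < j`; with `j = k` the last one is `-γ`. -/
def negExp (γ : ℝ) (k j : ℕ) : List ℝ :=
  (List.range j).map fun i : ℕ => -(γ + 2 * ((k : ℝ) - 1 - (i : ℝ)))

/-- One Laplacian raises the weight `s` to `s + 2` and produces the factors with exponents `s` and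
`s - (n - 2)`. -/
lemma lap_step {n : ℕ} {e : EuclideanSpace ℝ (Fin n)} (he : ‖e‖ = 1)
    {g : EuclideanSpace ℝ (Fin n) → ℝ} (hg : ContDiff ℝ 2 g)
    (hrad : ∀ x y, ‖x‖ = ‖y‖ → g x = g y) (s : ℝ) :
    (fun t => exp ((s + 2) * t) * rayLog e (lap g) t) =
      Lop (s - (n - 2)) (Lop s fun t => exp (s * t) * rayLog e g t) := by
  have hG : ContDiff ℝ 2 (rayLog e g) := contDiff_rayLog e hg
  have hG1 : Differentiable ℝ (rayLog e g) := hG.differentiable (by norm_num)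
  have hG2 : Differentiable ℝ (deriv (rayLog e g)) := by
    have := (contDiff_succ_iff_deriv (n := 1) (f := rayLog e g)).1 (by exact_mod_cast hG)
    exact this.2.2.differentiable (by norm_num)
  have h1 : (Lop s fun t => exp (s * t) * rayLog e g t) =
      fun t => exp (s * t) * deriv (rayLog e g) t := by
    funext t
    have := ((hasDerivAt_exp_mul s t).fun_mul (hG1 t).hasDerivAt).deriv
    simp only [Lop]
    rw [this]; ring
  funext t
  have h2 := ((hasDerivAt_exp_mul s t).fun_mul (hG2 t).hasDerivAt).deriv
  have hne : exp t • e ≠ 0 := by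
    rw [← norm_pos_iff, norm_smul, he]; simp [exp_pos]
  have hnorm : ‖exp t • e‖ = exp t := by rw [norm_smul, he]; simp
  have h3 := lap_radial he hg hrad hne
  rw [hnorm, log_exp] at h3
  rw [h1]
  simp only [Lop]
  rw [h2]
  change exp ((s + 2) * t) * lap g (exp t • e) = _
  rw [h3, show (s + 2) * t = s * t + (t + t) by ring, exp_add, exp_add]
  have := (exp_pos t).ne'
  field_simp
  ring

/-- In Emden-Fowler coordinates the polyharmonic operator on radial functions has constant
coefficients and factors into first-order operators. -/
lemma iterLap_eq_prodOp {n k : ℕ} {e : EuclideanSpace ℝ (Fin n)} (he : ‖e‖ = 1)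
    {γ : ℝ} (hγ : 2 * γ = n - 2 * k) {u : EuclideanSpace ℝ (Fin n) → ℝ}
    (hu : ContDiff ℝ ((2 * k : ℕ) : WithTop ℕ∞) u) (hrad : ∀ x y, ‖x‖ = ‖y‖ → u x = u y) :
    (fun t => exp ((γ + 2 * k) * t) * rayLog e (iterLap k u) t) =
      prodOp (posExp γ k ++ negExp γ k k) fun t => exp (γ * t) * rayLog e u t := by
  set V : ℝ → ℝ := fun t => exp (γ * t) * rayLog e u t
  have hV : ContDiff ℝ ((2 * k : ℕ) : WithTop ℕ∞) V :=
    (Real.contDiff_exp.comp (contDiff_const.mul contDiff_id)).mul (contDiff_rayLog e hu)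
  have main : ∀ j m : ℕ, j + m = k →
      ContDiff ℝ ((2 * m : ℕ) : WithTop ℕ∞) (iterLap j u) ∧
      (∀ x y, ‖x‖ = ‖y‖ → iterLap j u x = iterLap j u y) ∧
      (fun t => exp ((γ + 2 * j) * t) * rayLog e (iterLap j u) t) =
        prodOp (posExp γ j ++ negExp γ k j) V := by
    intro j
    induction j with
    | zero =>
      intro m hm
      obtain rfl : m = k := by omega
      refine ⟨hu, hrad, ?_⟩
      simp [posExp, negExp, prodOp, iterLap, V]
    | succ j ih =>
      intro m hm
      obtain ⟨h1, h2, h3⟩ := ih (m + 1) (by omega)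
      have h1' : ContDiff ℝ 2 (iterLap j u) := h1.of_le (by exact_mod_cast (by omega))
      have e1 : iterLap (j + 1) u = lap (iterLap j u) := Function.iterate_succ_apply' _ _ _
      rw [e1]
      refine ⟨contDiff_lap h1, lap_radial_radial he h1' h2, ?_⟩
      have hs := lap_step he h1' h2 (γ + 2 * j)
      have e2 : γ + 2 * (j : ℝ) - (n - 2) = -(γ + 2 * ((k : ℝ) - 1 - (j : ℝ))) := by linarith
      rw [h3, e2] at hs
      have e3 : γ + 2 * ((j + 1 : ℕ) : ℝ) = γ + 2 * j + 2 := by push_cast; ring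
      rw [e3, hs]
      have e4 : Lop (-(γ + 2 * ((k : ℝ) - 1 - (j : ℝ)))) (Lop (γ + 2 * j)
          (prodOp (posExp γ j ++ negExp γ k j) V)) =
          prodOp ((posExp γ j ++ negExp γ k j) ++
            [γ + 2 * (j : ℝ), -(γ + 2 * ((k : ℝ) - 1 - (j : ℝ)))]) V := by
        rw [prodOp_append (posExp γ j ++ negExp γ k j)]; rfl
      rw [e4]
      refine prodOp_perm ?_ (hV.of_le ?_)
      · simp only [posExp, negExp, List.range_succ, List.map_append, List.map_cons, List.map_nil]
        rw [List.append_assoc, List.append_assoc]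
        refine List.Perm.append_left _ ?_
        exact (List.perm_append_comm_assoc _ [γ + 2 * (j : ℝ)] _)
      · simp only [posExp, negExp, List.length_append, List.length_map, List.length_range,
          List.length_cons, List.length_nil]
        exact_mod_cast (by omega)
  exact (main k 0 rfl).2.2

lemma iteratedDeriv_ray {n m : ℕ} {u : EuclideanSpace ℝ (Fin n) → ℝ}
    (hu : ContDiff ℝ m u) (e : EuclideanSpace ℝ (Fin n)) (r : ℝ) :
    iteratedDeriv m (fun r : ℝ => u (r • e)) r = iteratedFDeriv ℝ m u (r • e) fun _ => e := by
  have h := (ContinuousLinearMap.toSpanSingleton ℝ e).iteratedFDeriv_comp_right hu r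
    (i := m) le_rfl
  rw [iteratedDeriv_eq_iteratedFDeriv]
  have e1 : (fun r : ℝ => u (r • e)) = u ∘ (ContinuousLinearMap.toSpanSingleton ℝ e) := by
    funext r; simp [ContinuousLinearMap.toSpanSingleton_apply]
  rw [e1, h]
  simp [ContinuousMultilinearMap.compContinuousLinearMap_apply,
    ContinuousLinearMap.toSpanSingleton_apply]

/-- The energy of a radial function in Emden-Fowler coordinates. -/
lemma energy_radial {n : ℕ} (hn : 0 < n) {e : EuclideanSpace ℝ (Fin n)} (he : ‖e‖ = 1)
    {u : EuclideanSpace ℝ (Fin n) → ℝ} (hu : Continuous u)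
    (hrad : ∀ x y, ‖x‖ = ‖y‖ → u x = u y) {γ q E : ℝ} (hq : 0 ≤ q) (hγq : γ * q = n)
    (hE : ∫ x in Metric.ball (0 : EuclideanSpace ℝ (Fin n)) 1, |u x| ^ q ≤ E)
    {a b : ℝ} (hab : a ≤ b) (hb : b ≤ 0) :
    ∫ t in a..b, |exp (γ * t) * rayLog e u t| ^ q ≤
      E / (n * volume.real (Metric.ball (0 : EuclideanSpace ℝ (Fin n)) 1)) := by
  have : Nonempty (Fin n) := ⟨⟨0, hn⟩⟩
  have : Nontrivial (EuclideanSpace ℝ (Fin n)) := ⟨⟨e, 0, by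
    intro h; rw [h, norm_zero] at he; exact zero_ne_one he⟩⟩
  set f : ℝ → ℝ := fun r => |u (r • e)| ^ q with hf
  have hfc : Continuous f :=
    ((hu.comp (continuous_id.smul continuous_const)).abs).rpow_const fun _ => Or.inr hq
  have hf0 : ∀ r, 0 ≤ f r := fun r => by positivity
  -- Polar coordinates.
  have h1 : ∫ x in Metric.ball (0 : EuclideanSpace ℝ (Fin n)) 1, |u x| ^ q =
      ∫ x : EuclideanSpace ℝ (Fin n), (Set.Iio (1 : ℝ)).indicator f ‖x‖ := by
    rw [← integral_indicator Metric.isOpen_ball.measurableSet]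
    congr 1
    funext x
    have : u x = u (‖x‖ • e) := hrad _ _ (by rw [norm_smul, he]; simp)
    by_cases hx : ‖x‖ < 1
    · rw [Set.indicator_of_mem (by simpa using hx), Set.indicator_of_mem (by simpa using hx), hf,
        this]
    · rw [Set.indicator_of_notMem (by simpa using hx), Set.indicator_of_notMem (by simpa using hx)]
  rw [h1, integral_fun_norm_addHaar] at hE
  have hvol : 0 < volume.real (Metric.ball (0 : EuclideanSpace ℝ (Fin n)) 1) :=
    ENNReal.toReal_pos (Metric.measure_ball_pos _ _ one_pos).ne' measure_ball_lt_top.ne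
  have hn' : (0 : ℝ) < n := by exact_mod_cast hn
  simp only [finrank_euclideanSpace, Fintype.card_fin, nsmul_eq_mul, smul_eq_mul] at hE
  rw [le_div_iff₀ (by positivity), mul_comm]
  refine le_trans ?_ hE
  rw [mul_assoc]
  refine mul_le_mul_of_nonneg_left (mul_le_mul_of_nonneg_left ?_ hvol.le) hn'.le
  -- The substitution `r = exp t`.
  have h2 : ∫ t in a..b, |exp (γ * t) * rayLog e u t| ^ q =
      ∫ r in exp a..exp b, r ^ (n - 1) * f r := by
    rw [← intervalIntegral.integral_comp_mul_deriv (f := exp) (f' := exp)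
      (g := fun r => r ^ (n - 1) * f r) (fun t _ => Real.hasDerivAt_exp t)
      Real.continuous_exp.continuousOn (by fun_prop)]
    refine intervalIntegral.integral_congr fun t _ => ?_
    simp only [Function.comp, hf]
    rw [abs_mul, abs_of_pos (exp_pos _), mul_rpow (exp_pos _).le (abs_nonneg _), ← exp_mul]
    have e1 : γ * t * q = n * t := by rw [← hγq]; ring
    have e2 : exp ((n : ℝ) * t) = exp t ^ (n - 1) * exp t := by
      rw [← pow_succ, Nat.sub_add_cancel hn, ← exp_nat_mul]
    rw [e1, e2]
    simp only [rayLog]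
    ring
  have hle : exp a ≤ exp b := exp_le_exp.2 hab
  have hb1 : exp b ≤ 1 := by rwa [exp_le_one_iff]
  have hint : IntegrableOn (fun y : ℝ => y ^ (n - 1) * f y) (Set.Ioc 0 1) volume :=
    (Continuous.integrableOn_Icc (by fun_prop)).mono_set Set.Ioc_subset_Icc_self
  have h3 : ∫ y in Set.Ioi (0 : ℝ), y ^ (n - 1) * (Set.Iio (1 : ℝ)).indicator f y =
      ∫ y in Set.Ioo (0 : ℝ) 1, y ^ (n - 1) * f y := by
    have : (fun y : ℝ => y ^ (n - 1) * (Set.Iio (1 : ℝ)).indicator f y) =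
        (Set.Iio (1 : ℝ)).indicator fun y => y ^ (n - 1) * f y := by
      funext y
      by_cases hy : y < 1
      · rw [Set.indicator_of_mem (by simpa using hy), Set.indicator_of_mem (by simpa using hy)]
      · rw [Set.indicator_of_notMem (by simpa using hy),
          Set.indicator_of_notMem (by simpa using hy), mul_zero]
    rw [this, setIntegral_indicator measurableSet_Iio, Set.Ioi_inter_Iio]
  rw [h2, h3, intervalIntegral.integral_of_le hle, ← integral_Ioc_eq_integral_Ioo]
  refine setIntegral_mono_set hint ?_ ?_
  · filter_upwards [ae_restrict_mem measurableSet_Ioc] with y hy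
    exact mul_nonneg (pow_nonneg hy.1.le _) (hf0 y)
  · exact (Set.Ioc_subset_Ioc (exp_pos a).le hb1).eventuallyLE

lemma posExp_ge {γ : ℝ} {j : ℕ} : ∀ σ ∈ posExp γ j, γ ≤ σ := by
  intro σ hσ
  obtain ⟨i, _, rfl⟩ := List.mem_map.1 hσ
  have : (0 : ℝ) ≤ i := Nat.cast_nonneg i
  linarith

lemma negExp_le {γ : ℝ} {k : ℕ} : ∀ σ ∈ negExp γ k (k - 1), γ + 1 ≤ -σ := by
  intro σ hσ
  obtain ⟨i, hi, rfl⟩ := List.mem_map.1 hσ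
  have h1 : i + 2 ≤ k := by have := List.mem_range.1 hi; omega
  have : (i : ℝ) + 2 ≤ k := by exact_mod_cast h1
  linarith

lemma negExp_last {γ : ℝ} {k : ℕ} (hk : 1 ≤ k) :
    negExp γ k k = negExp γ k (k - 1) ++ [-γ] := by
  obtain ⟨m, rfl⟩ : ∃ m, k = m + 1 := ⟨k - 1, by omega⟩
  simp [negExp, List.range_succ]

@[simp] lemma length_posExp (γ : ℝ) (j : ℕ) : (posExp γ j).length = j := by simp [posExp]

@[simp] lemma length_negExp (γ : ℝ) (k j : ℕ) : (negExp γ k j).length = j := by simp [negExp]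

/-- The Emden-Fowler transform `τ ↦ r ^ γ * u (r e)`, `r = exp (T + τ)`. The shift `T` places the
inner radius `exp T` at `τ = 0` and the unit sphere at `τ = -T`. -/
def emden {n : ℕ} (γ T : ℝ) (e : EuclideanSpace ℝ (Fin n)) (u : EuclideanSpace ℝ (Fin n) → ℝ) :
    ℝ → ℝ :=
  fun τ => exp (γ * (T + τ)) * u (exp (T + τ) • e)

section Emden

variable {n k : ℕ} {γ lam E T : ℝ} {e : EuclideanSpace ℝ (Fin n)}
  {u : EuclideanSpace ℝ (Fin n) → ℝ}

lemma contDiff_emden (hu : ContDiff ℝ ((2 * k : ℕ) : WithTop ℕ∞) u) :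
    ContDiff ℝ ((2 * k : ℕ) : WithTop ℕ∞) (emden γ T e u) := by
  have h : ContDiff ℝ ((2 * k : ℕ) : WithTop ℕ∞) (fun τ : ℝ => T + τ) :=
    contDiff_const.add contDiff_id
  exact (Real.contDiff_exp.comp (contDiff_const.mul h)).mul ((contDiff_rayLog e hu).comp h)

lemma prodOp_emden (l : List ℝ) (τ : ℝ) :
    prodOp l (emden γ T e u) τ = prodOp l (fun t => exp (γ * t) * u (exp t • e)) (T + τ) :=
  prodOp_shift l (fun t => exp (γ * t) * u (exp t • e)) T τ

/-- Dirichlet conditions for `u` on the unit sphere become vanishing conditions at `τ = -T`. -/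
lemma emden_dirichlet (he : ‖e‖ = 1) (hu : ContDiff ℝ ((2 * k : ℕ) : WithTop ℕ∞) u)
    (hD : ∀ x : EuclideanSpace ℝ (Fin n), ‖x‖ = 1 → ∀ j < k,
      iteratedFDeriv ℝ j u x (fun _ => x) = 0) (l : List ℝ) (hl : l.length < k) :
    prodOp l (emden γ T e u) (-T) = 0 := by
  rw [prodOp_emden, add_neg_cancel]
  obtain ⟨C, -, hC⟩ := prodOp_bound l (fun t => exp (γ * t))
    (Real.contDiff_exp.comp (contDiff_const.mul contDiff_id)) 0
  have hf : ContDiff ℝ ((2 * k : ℕ) : WithTop ℕ∞) (fun r : ℝ => u (r • e)) :=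
    hu.comp (contDiff_id.smul contDiff_const)
  have := hC (fun r => u (r • e)) (hf.of_le (by exact_mod_cast (by omega))) 0 (fun m hm => by
    rw [exp_zero, iteratedDeriv_ray (hu.of_le (by exact_mod_cast (by omega))), one_smul,
      hD e he m (by omega), abs_zero])
  rw [mul_zero] at this
  exact abs_eq_zero.1 (le_antisymm this (abs_nonneg _))

/-- The differential inequality satisfied by the Emden-Fowler transform inside the unit ball. The
nonlinearity carries no weight, because `γ (2* - 1) = γ + 2 k`. -/
lemma emden_equation (hk : 1 ≤ k) (hkn : 2 * k < n) (hγ : γ = ((n : ℝ) - 2 * k) / 2)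
    (he : ‖e‖ = 1) (hlam : 0 ≤ lam) (hu : ContDiff ℝ ((2 * k : ℕ) : WithTop ℕ∞) u)
    (hrad : ∀ x y, ‖x‖ = ‖y‖ → u x = u y)
    (heq : ∀ x ∈ Metric.ball (0 : EuclideanSpace ℝ (Fin n)) 1,
      iterLap k u x - lam * u x = |u x| ^ (twoStar n k - 2) * u x)
    {τ : ℝ} (hτ : τ < -T) :
    |Lop (-γ) (prodOp (posExp γ k ++ negExp γ k (k - 1)) (emden γ T e u)) τ| ≤
      lam * exp (2 * k * (τ - -T)) * |emden γ T e u τ| + |emden γ T e u τ| ^ (twoStar n k - 1) := by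
  have hn : (2 : ℝ) * k < n := by exact_mod_cast hkn
  have hd : (n : ℝ) - 2 * k ≠ 0 := by linarith
  have e1 : Lop (-γ) (prodOp (posExp γ k ++ negExp γ k (k - 1)) (emden γ T e u)) =
      prodOp (posExp γ k ++ negExp γ k k) (emden γ T e u) := by
    rw [negExp_last hk, ← List.append_assoc, prodOp_append (posExp γ k ++ negExp γ k (k - 1))]
    rfl
  rw [e1, prodOp_emden]
  have h1 := congrFun (iterLap_eq_prodOp (k := k) he (γ := γ) (by rw [hγ]; ring) hu hrad) (T + τ)
  rw [show (fun t => exp (γ * t) * u (exp t • e)) = fun t => exp (γ * t) * rayLog e u t from rfl,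
    ← h1]
  set t := T + τ with ht
  have ht0 : t < 0 := by linarith
  have hball : exp t • e ∈ Metric.ball (0 : EuclideanSpace ℝ (Fin n)) 1 := by
    rw [mem_ball_zero_iff, norm_smul, he, mul_one, norm_eq_abs, abs_of_pos (exp_pos _)]
    rwa [exp_lt_one_iff]
  have h2 := heq _ hball
  have h3 : iterLap k u (exp t • e) =
      lam * u (exp t • e) + |u (exp t • e)| ^ (twoStar n k - 2) * u (exp t • e) := by linarith
  simp only [rayLog, emden, ← ht]
  rw [h3, show τ - -T = t by rw [ht]; ring]
  set y := u (exp t • e)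
  have hq : 0 < twoStar n k - 2 := by
    have hk0 : (0 : ℝ) < k := by exact_mod_cast hk
    rw [twoStar, sub_pos, lt_div_iff₀ (by linarith)]; linarith
  have e2 : |y| ^ (twoStar n k - 1) = |y| ^ (twoStar n k - 2) * |y| := by
    have := rpow_add_one' (abs_nonneg y) (y := twoStar n k - 2) (by linarith)
    rw [← this]; congr 1; ring
  have e3 : exp (γ * t) ^ (twoStar n k - 1) = exp ((γ + 2 * k) * t) := by
    rw [← exp_mul]; congr 1
    rw [hγ, twoStar]; field_simp; ring
  rw [abs_mul (exp (γ * t)), abs_of_pos (exp_pos (γ * t)),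
    mul_rpow (exp_pos _).le (abs_nonneg _), e3, e2, abs_mul, abs_of_pos (exp_pos _)]
  have e4 : |lam * y + |y| ^ (twoStar n k - 2) * y| ≤
      lam * |y| + |y| ^ (twoStar n k - 2) * |y| := by
    refine (abs_add_le _ _).trans ?_
    rw [abs_mul, abs_mul, abs_of_nonneg hlam, abs_of_nonneg (rpow_nonneg (abs_nonneg y) _)]
  calc _ ≤ exp ((γ + 2 * k) * t) * (lam * |y| + |y| ^ (twoStar n k - 2) * |y|) := by gcongr
    _ = _ := by
      rw [show (γ + 2 * k) * t = γ * t + 2 * k * t by ring, exp_add]; ring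

/-- The bound on `∫ |u| ^ 2*`, written with the exponent `(2* - 1) + 1` used in
`bounded_of_energy`. -/
lemma emden_energy (hkn : 2 * k < n) (hγ : γ = ((n : ℝ) - 2 * k) / 2)
    (he : ‖e‖ = 1) (hu : ContDiff ℝ ((2 * k : ℕ) : WithTop ℕ∞) u)
    (hrad : ∀ x y, ‖x‖ = ‖y‖ → u x = u y)
    (hE : ∫ x in Metric.ball (0 : EuclideanSpace ℝ (Fin n)) 1, |u x| ^ twoStar n k ≤ E)
    {t : ℝ} (ht : t ∈ Set.Icc 0 (-T)) :
    ∫ s in (0 : ℝ)..t, |emden γ T e u s| ^ (twoStar n k - 1 + 1) ≤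
      E / (n * volume.real (Metric.ball (0 : EuclideanSpace ℝ (Fin n)) 1)) := by
  have hn : (2 : ℝ) * k < n := by exact_mod_cast hkn
  have hd : (n : ℝ) - 2 * k ≠ 0 := by linarith
  rw [sub_add_cancel]
  have h1 : ∫ s in (0 : ℝ)..t, |emden γ T e u s| ^ twoStar n k =
      ∫ s in T..T + t, |exp (γ * s) * rayLog e u s| ^ twoStar n k := by
    have := intervalIntegral.integral_comp_add_left (a := 0) (b := t)
      (fun s => |exp (γ * s) * rayLog e u s| ^ twoStar n k) T
    rw [add_zero] at this
    exact this
  rw [h1]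
  refine energy_radial (by omega) he hu.continuous hrad ?_ ?_ hE (by linarith [ht.1])
    (by linarith [ht.2])
  · rw [twoStar]; exact div_nonneg (by positivity) (by linarith)
  · rw [hγ, twoStar]; field_simp

end Emden

/-! ### Consequences of the concentration hypothesis -/

lemma continuous_Ubub {n k : ℕ} (hkn : 2 * k < n) : Continuous (Ubub n k) := by
  have hn : (2 : ℝ) * k < n := by exact_mod_cast hkn
  have ha : 0 ≤ ank n k := by
    refine rpow_nonneg (Finset.prod_nonneg fun j _ => ?_) _
    have : (0 : ℝ) ≤ j := Nat.cast_nonneg j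
    linarith
  have h1 : ∀ x : EuclideanSpace ℝ (Fin n), 1 + ank n k * ‖x‖ ^ 2 ≠ 0 := fun x => by positivity
  unfold Ubub
  refine Continuous.rpow_const ?_ fun _ => Or.inr (by linarith)
  exact continuous_const.div (by fun_prop) h1

/-- A bound, uniform over prefixes of a list, from a bound for each prefix. -/
lemma eventually_prefix_bound (l : List ℝ) (F : List ℝ → ℕ → ℝ)
    (h : ∀ l', l' <+: l → ∃ A : ℝ, ∀ᶠ i in atTop, F l' i ≤ A) :
    ∃ A : ℝ, 0 ≤ A ∧ ∀ᶠ i in atTop, ∀ l', l' <+: l → F l' i ≤ A := by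
  choose A hA using fun m : ℕ => h (l.take m) (List.take_prefix m l)
  refine ⟨∑ m ∈ Finset.range (l.length + 1), |A m|, Finset.sum_nonneg fun _ _ => abs_nonneg _, ?_⟩
  have h1 : ∀ᶠ i in atTop, ∀ m ∈ Finset.range (l.length + 1), F (l.take m) i ≤ A m :=
    (Finset.eventually_all _).2 fun m _ => hA m
  filter_upwards [h1] with i hi l' hl'
  have hm : l'.length ∈ Finset.range (l.length + 1) := by
    rw [Finset.mem_range]; exact Nat.lt_succ_of_le hl'.length_le
  have h2 := hi _ hm
  rw [← List.prefix_iff_eq_take.1 hl'] at h2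
  exact h2.trans ((le_abs_self _).trans
    (Finset.single_le_sum (f := fun m => |A m|) (fun _ _ => abs_nonneg _) hm))

/-- Local convergence of the rescaled functions bounds the initial data at `|x| = R ν_i`. -/
lemma data_bound {n k : ℕ} {γ : ℝ} {e : EuclideanSpace ℝ (Fin n)} (he : ‖e‖ = 1)
    {u : ℕ → EuclideanSpace ℝ (Fin n) → ℝ} {g : EuclideanSpace ℝ (Fin n) → ℝ} {ν : ℕ → ℝ}
    (hu : ∀ i, ContDiff ℝ ((2 * k : ℕ) : WithTop ℕ∞) (u i)) (hν : ∀ i, 0 < ν i)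
    (hconv : CLocConv (2 * k) {(0 : EuclideanSpace ℝ (Fin n))}ᶜ
      (fun i z => (ν i) ^ γ * u i ((ν i) • z)) g)
    {R : ℝ} (hR : 0 < R) (l : List ℝ) (hl : l.length ≤ 2 * k) :
    ∃ A : ℝ, 0 ≤ A ∧ ∀ᶠ i in atTop, ∀ l', l' <+: l →
      |prodOp l' (emden γ (log (R * ν i)) e (u i)) 0| ≤ A := by
  set z : EuclideanSpace ℝ (Fin n) := R • e with hz
  have hz0 : z ≠ 0 := by
    rw [← norm_pos_iff, hz, norm_smul, he]; simp [hR.ne']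
  -- All derivatives of order at most `2k` of the rescaled functions at `z` are eventually bounded.
  set B : ℝ := ∑ m ∈ Finset.range (2 * k + 1), (‖iteratedFDeriv ℝ m g z‖ + 1)
  have hB : ∀ᶠ i in atTop, ∀ m ∈ Finset.range (2 * k + 1),
      ‖iteratedFDeriv ℝ m (fun z => (ν i) ^ γ * u i ((ν i) • z)) z‖ ≤ B := by
    refine (Finset.eventually_all _).2 fun m hm => ?_
    have h1 := hconv {z} (by simpa using hz0.symm) isCompact_singleton m
      (Nat.lt_succ_iff.1 (Finset.mem_range.1 hm))
    filter_upwards [h1.eventually (gt_mem_nhds one_pos)] with i hi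
    replace hi := (le_ciSup (Set.finite_range _).bddAbove
      (⟨z, rfl⟩ : ({z} : Set (EuclideanSpace ℝ (Fin n))))).trans_lt hi
    change ‖iteratedFDeriv ℝ m (fun z => (ν i) ^ γ * u i ((ν i) • z)) z
      - iteratedFDeriv ℝ m g z‖ < 1 at hi
    have h2 := norm_le_norm_sub_add
      (iteratedFDeriv ℝ m (fun z => (ν i) ^ γ * u i ((ν i) • z)) z) (iteratedFDeriv ℝ m g z)
    have h3 : ‖iteratedFDeriv ℝ m g z‖ + 1 ≤ B :=
      Finset.single_le_sum (f := fun m => ‖iteratedFDeriv ℝ m g z‖ + 1)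
        (fun _ _ => by positivity) hm
    linarith
  refine eventually_prefix_bound l (fun l' i => |prodOp l' (emden γ (log (R * ν i)) e (u i)) 0|)
    fun l' hl' => ?_
  have hl2 : l'.length ≤ 2 * k := hl'.length_le.trans hl
  obtain ⟨C, -, hC⟩ := prodOp_bound l' (fun t => exp (γ * t))
    (Real.contDiff_exp.comp (contDiff_const.mul contDiff_id)) (log R)
  refine ⟨C * B, ?_⟩
  filter_upwards [hB] with i hi
  set ut : EuclideanSpace ℝ (Fin n) → ℝ := fun z => (ν i) ^ γ * u i ((ν i) • z) with hut
  have hutc : ContDiff ℝ ((2 * k : ℕ) : WithTop ℕ∞) ut :=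
    contDiff_const.mul ((hu i).comp (contDiff_id.const_smul (ν i)))
  have hf : ContDiff ℝ ((2 * k : ℕ) : WithTop ℕ∞) (fun r : ℝ => ut (r • e)) :=
    hutc.comp (contDiff_id.smul contDiff_const)
  have h1 := hC (fun r => ut (r • e)) (hf.of_le (by exact_mod_cast hl2)) B (fun m hm => by
    rw [exp_log hR, iteratedDeriv_ray (hutc.of_le (by exact_mod_cast hm.trans hl2))]
    have h2 := hi m (Finset.mem_range.2 (by omega))
    have h3 := (iteratedFDeriv ℝ m ut z).le_opNorm fun _ => e
    simp only [he, Finset.prod_const_one, mul_one] at h3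
    exact h3.trans h2)
  have h4 : (fun t => exp (γ * t) * ut (exp t • e)) = emden γ (log (ν i)) e (u i) := by
    funext t
    simp only [emden, hut]
    rw [mul_add, exp_add, exp_add, exp_log (hν i), mul_smul, mul_comm γ (log (ν i)), ← rpow_def_of_pos (hν i)]
    ring
  rw [h4, prodOp_emden] at h1
  rw [prodOp_emden, add_zero, log_mul hR.ne' (hν i).ne', add_comm (log R)]
  exact h1

lemma emden_log_norm {n : ℕ} {γ T : ℝ} {e : EuclideanSpace ℝ (Fin n)} (he : ‖e‖ = 1)
    {u : EuclideanSpace ℝ (Fin n) → ℝ} (hrad : ∀ x y, ‖x‖ = ‖y‖ → u x = u y)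
    {x : EuclideanSpace ℝ (Fin n)} (hx : 0 < ‖x‖) :
    |emden γ T e u (log ‖x‖ - T)| = ‖x‖ ^ γ * |u x| := by
  have h1 : u (‖x‖ • e) = u x := hrad _ _ (by rw [norm_smul, he, mul_one, norm_norm])
  rw [emden, add_sub_cancel, exp_log hx, h1, mul_comm γ, ← rpow_def_of_pos hx, abs_mul,
    abs_of_nonneg (rpow_nonneg hx.le _)]

/-- The smallness of `|x| ^ γ |u_i|` for `|x| ≥ R ν_i`, extracted from the limit superior. The
a priori bound `hb` rules out the junk value of the `limsup` of an unbounded sequence. -/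
lemma small_of_limsup {X : Type*} {s : ℕ → Set X} {F : ℕ → X → ℝ} {b δ : ℝ} (hb0 : 0 ≤ b)
    (hb : ∀ᶠ i in atTop, ∀ x ∈ s i, F i x ≤ b)
    (hlim : limsup (fun i => ⨆ x : {x // x ∈ s i}, F i x) atTop < δ) :
    ∀ᶠ i in atTop, ∀ x ∈ s i, F i x < δ := by
  have h1 : ∀ᶠ i in atTop, (⨆ x : {x // x ∈ s i}, F i x) ≤ b := by
    filter_upwards [hb] with i hi
    exact Real.iSup_le (fun x => hi x x.2) hb0
  have h2 := eventually_lt_of_limsup_lt hlim (isBoundedUnder_of_eventually_le h1)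
  filter_upwards [hb, h2] with i hi h2 x hx
  refine (le_ciSup (f := fun x : {x // x ∈ s i} => F i x) ⟨b, ?_⟩ ⟨x, hx⟩).trans_lt h2
  rintro _ ⟨y, rfl⟩
  exact hi y y.2

/-- The estimate on the annulus `ν_i ≤ |x| ≤ R ν_i`, read off from the local convergence. -/
lemma annulus_bound {n k : ℕ} {γ : ℝ} (hγ : 0 ≤ γ)
    {u : ℕ → EuclideanSpace ℝ (Fin n) → ℝ} {g : EuclideanSpace ℝ (Fin n) → ℝ} {ν : ℕ → ℝ}
    (hu : ∀ i, Continuous (u i)) (hg : Continuous g) (hν : ∀ i, 0 < ν i)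
    (hconv : CLocConv (2 * k) {(0 : EuclideanSpace ℝ (Fin n))}ᶜ
      (fun i z => (ν i) ^ γ * u i ((ν i) • z)) g) {R : ℝ} (hR : 0 < R) :
    ∃ C : ℝ, 0 ≤ C ∧ ∀ᶠ i in atTop, ∀ x : EuclideanSpace ℝ (Fin n), ν i ≤ ‖x‖ → ‖x‖ ≤ R * ν i →
      |u i x| ≤ C * (ν i) ^ γ * ‖x‖ ^ (-(2 * γ)) := by
  set K : Set (EuclideanSpace ℝ (Fin n)) := Metric.closedBall 0 R ∩ {z | 1 ≤ ‖z‖} with hKdef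
  have hK : IsCompact K :=
    (isCompact_closedBall _ _).inter_right (isClosed_le continuous_const continuous_norm)
  have hK0 : K ⊆ {(0 : EuclideanSpace ℝ (Fin n))}ᶜ := by
    rintro z ⟨-, hz⟩ rfl
    simp only [Set.mem_ofPred_eq, norm_zero] at hz
    linarith
  obtain ⟨G, hG⟩ := hK.exists_bound_of_continuousOn hg.continuousOn
  have h1 := hconv K hK0 hK 0 (Nat.zero_le _)
  refine ⟨(|G| + 1) * R ^ (2 * γ), by positivity, ?_⟩
  filter_upwards [h1.eventually (gt_mem_nhds one_pos)] with i hi x hx1 hx2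
  have hνi := hν i
  have hx0 : 0 < ‖x‖ := hνi.trans_le hx1
  set z := (ν i)⁻¹ • x with hz
  have hnz : ‖z‖ = (ν i)⁻¹ * ‖x‖ := by
    rw [hz, norm_smul, norm_eq_abs, abs_of_pos (inv_pos.2 hνi)]
  have hzK : z ∈ K := by
    refine ⟨?_, ?_⟩
    · rw [mem_closedBall_zero_iff, hnz, inv_mul_le_iff₀ hνi]; linarith
    · rw [Set.mem_ofPred_eq, hnz, le_inv_mul_iff₀ hνi]; linarith
  have hfun : ∀ y, ‖iteratedFDeriv ℝ 0 (fun z => (ν i) ^ γ * u i ((ν i) • z)) y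
      - iteratedFDeriv ℝ 0 g y‖ = |(ν i) ^ γ * u i ((ν i) • y) - g y| := by
    intro y
    rw [iteratedFDeriv_zero_eq_comp, iteratedFDeriv_zero_eq_comp, Function.comp_apply,
      Function.comp_apply, ← map_sub, LinearIsometryEquiv.norm_map, norm_eq_abs]
  have hui := hu i
  have hbdd : BddAbove (Set.range fun y : K => ‖iteratedFDeriv ℝ 0
      (fun z => (ν i) ^ γ * u i ((ν i) • z)) (y : EuclideanSpace ℝ (Fin n))
      - iteratedFDeriv ℝ 0 g (y : EuclideanSpace ℝ (Fin n))‖) := by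
    obtain ⟨b, hb⟩ := hK.exists_bound_of_continuousOn
      (f := fun y => (ν i) ^ γ * u i ((ν i) • y) - g y) (by fun_prop)
    refine ⟨b, ?_⟩
    rintro _ ⟨y, rfl⟩
    simp only [hfun]
    exact hb y y.2
  have h2 := (le_ciSup hbdd ⟨z, hzK⟩).trans_lt hi
  simp only [hfun] at h2
  have hzx : (ν i) • z = x := by rw [hz, smul_smul, mul_inv_cancel₀ hνi.ne', one_smul]
  rw [hzx] at h2
  have h3 : |(ν i) ^ γ * u i x| ≤ |G| + 1 := by
    have h4 := hG z hzK
    rw [norm_eq_abs] at h4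
    have h5 := abs_add_le ((ν i) ^ γ * u i x - g z) (g z)
    rw [sub_add_cancel] at h5
    linarith [le_abs_self G]
  have hp : 0 < (ν i) ^ γ := rpow_pos_of_pos hνi _
  rw [abs_mul, abs_of_pos hp] at h3
  have h6 : 1 ≤ R ^ (2 * γ) * ((ν i) ^ γ * (ν i) ^ γ) * ‖x‖ ^ (-(2 * γ)) := by
    have e1 : R ^ (2 * γ) * ((ν i) ^ γ * (ν i) ^ γ) = (R * ν i) ^ (2 * γ) := by
      rw [mul_rpow hR.le hνi.le, ← rpow_add hνi]; congr 2; ring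
    rw [e1, rpow_neg hx0.le, ← div_eq_mul_inv, one_le_div (rpow_pos_of_pos hx0 _)]
    exact rpow_le_rpow hx0.le hx2 (by linarith)
  refine le_of_mul_le_mul_left ?_ hp
  calc (ν i) ^ γ * |u i x| ≤ (|G| + 1) * 1 := by linarith
    _ ≤ (|G| + 1) * (R ^ (2 * γ) * ((ν i) ^ γ * (ν i) ^ γ) * ‖x‖ ^ (-(2 * γ))) := by gcongr
    _ = _ := by ring

/-! ### The pointwise estimate -/

theorem stmt9 (n k : ℕ) (hk : 2 ≤ 2 * k) (hn : 2 * k < n) (M : ℝ) (hM : 0 < M)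
    (lam : ℕ → ℝ) (u : ℕ → EuclideanSpace ℝ (Fin n) → ℝ)
    (hsetup : BlowUpSetup n k M lam u)
    (ν : ℕ → ℝ) (ε₀ : ℝ) (hconc : Concentration n k u ν ε₀) :
    ∀ ω : Set (EuclideanSpace ℝ (Fin n)), IsCompact ω →
      ω ⊆ Metric.ball (0 : EuclideanSpace ℝ (Fin n)) 1 →
      ∃ C : ℝ, 0 < C ∧ ∃ i₀ : ℕ, ∀ i ≥ i₀,
        ∀ x ∈ ω, ν i ≤ ‖x‖ →
          |u i x| ≤ C * (ν i) ^ (((n : ℝ) - 2 * k) / 2) * ‖x‖ ^ (2 * (k : ℝ) - n) := by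
  intro ω _ hω
  obtain ⟨hlam0, hlam, hu, hrad, heq, hD, -, hE⟩ := hsetup
  obtain ⟨hν0, hν, -, hconv, hlim⟩ := hconc
  have hk1 : 1 ≤ k := by omega
  have hkR : (1 : ℝ) ≤ k := by exact_mod_cast hk1
  have hnR : (2 : ℝ) * k < n := by exact_mod_cast hn
  set γ : ℝ := ((n : ℝ) - 2 * k) / 2 with hγdef
  have hγ : 0 < γ := by rw [hγdef]; linarith
  have hp : 1 < twoStar n k - 1 := by
    rw [lt_sub_iff_add_lt, twoStar, lt_div_iff₀ (by linarith)]; linarith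
  set p := twoStar n k - 1 with hpdef
  obtain ⟨e, he⟩ : ∃ e : EuclideanSpace ℝ (Fin n), ‖e‖ = 1 :=
    ⟨EuclideanSpace.single ⟨0, by omega⟩ 1, by simp⟩
  have hP : ∀ σ ∈ posExp γ k, γ ≤ σ := posExp_ge
  have hN : ∀ σ ∈ negExp γ k (k - 1), γ + 1 ≤ -σ := negExp_le
  have hlen : 1 + (negExp γ k (k - 1)).length + (posExp γ k).length = 2 * k := by simp; omega
  obtain ⟨η, hη, hmain⟩ := decay_main (κ := 2 * k) hγ hp (by linarith) hP hN
  -- `δ` is the size of `|x| ^ γ |u_i|` below which `|W| ^ (p - 1) ≤ η`.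
  set δ := η ^ (p - 1)⁻¹ with hδdef
  have hδ : 0 < δ := rpow_pos_of_pos hη _
  have hδη : δ ^ (p - 1) = η := by
    rw [hδdef, ← rpow_mul hη.le, inv_mul_cancel₀ (by linarith), rpow_one]
  obtain ⟨R, hR, hR1⟩ := ((hlim.eventually (gt_mem_nhds hδ)).and (eventually_ge_atTop 1)).exists
  have hR0 : 0 < R := by linarith
  obtain ⟨A, hA, hdata⟩ := data_bound he hu hν0 hconv hR0 (posExp γ k ++ negExp γ k (k - 1))
    (by simp; omega)
  obtain ⟨C₁, hC₁, hdecay⟩ := hmain A hA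
  obtain ⟨C₂, hC₂, hann⟩ := annulus_bound hγ.le (fun i => (hu i).continuous)
    (continuous_const.mul (continuous_Ubub hn)) hν0 hconv hR0
  have hRν : ∀ᶠ i in atTop, R * ν i < 1 := by
    have := hν.const_mul R
    rw [mul_zero] at this
    exact this.eventually (gt_mem_nhds one_pos)
  have hW : ∀ i, ContDiff ℝ ((1 + (negExp γ k (k - 1)).length + (posExp γ k).length : ℕ) :
      WithTop ℕ∞) (emden γ (log (R * ν i)) e (u i)) := fun i => by
    rw [hlen]; exact contDiff_emden (hu i)
  have hDir : ∀ i, ∀ l' : List ℝ, l'.length < (posExp γ k).length →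
      prodOp l' (emden γ (log (R * ν i)) e (u i)) (-log (R * ν i)) = 0 := fun i l' hl' =>
    emden_dirichlet he (hu i) (hD i) l' (by simpa using hl')
  have hpos : ∀ i, 0 < R * ν i := fun i => mul_pos hR0 (hν0 i)
  -- The energy bound provides an a priori bound for `|x| ^ γ |u_i|` on `|x| ≥ R ν_i`.
  set M' := M ^ twoStar n k / (n * volume.real (Metric.ball (0 : EuclideanSpace ℝ (Fin n)) 1))
  have hM' : 0 ≤ M' := by positivity
  set b := (((negExp γ k (k - 1)).length : ℝ) * A + (A + 2 / γ + 2 * M')) /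
    γ ^ (posExp γ k).length
  have hb0 : 0 ≤ b := by positivity
  have hapriori : ∀ᶠ i in atTop, ∀ x ∈ {x : EuclideanSpace ℝ (Fin n) |
      x ∈ Metric.ball (0 : EuclideanSpace ℝ (Fin n)) 1 ∧ R * ν i ≤ ‖x‖},
      ‖x‖ ^ γ * |u i x| ≤ b := by
    filter_upwards [hdata, hlam.eventually (gt_mem_nhds one_pos)] with i hi hlami x hx
    have hx0 : 0 < ‖x‖ := (hpos i).trans_le hx.2
    have hx1 : ‖x‖ < 1 := mem_ball_zero_iff.1 hx.1
    rw [← emden_log_norm (T := log (R * ν i)) he (hrad i) hx0]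
    refine bounded_of_energy hγ hA hp hM' hP hN (hW i) hi (hDir i)
      (fun t ht => emden_energy hn hγdef he (hu i) (hrad i) (hE i) ht) (fun t ht => ?_)
      ⟨sub_nonneg.2 (log_le_log (hpos i) hx.2), ?_⟩
    · refine (emden_equation hk1 hn hγdef he (hlam0 i).le (hu i) (hrad i) (heq i) ht.2).trans ?_
      have h1 : exp (2 * k * (t - -log (R * ν i))) ≤ 1 :=
        exp_le_one_iff.2 (mul_nonpos_of_nonneg_of_nonpos (by positivity) (by linarith [ht.2]))
      have h2 : lam i * exp (2 * k * (t - -log (R * ν i))) ≤ 1 :=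
        mul_le_one₀ hlami.le (exp_pos _).le h1
      gcongr
      exact mul_le_of_le_one_left (abs_nonneg _) h2
    · linarith [log_neg hx0 hx1]
  have hsmall := small_of_limsup hb0 hapriori hR
  have hexp : 2 * (k : ℝ) - n = -(2 * γ) := by rw [hγdef]; ring
  obtain ⟨i₀, hi₀⟩ := eventually_atTop.1 ((hsmall.and hdata).and
    ((hlam.eventually (gt_mem_nhds hη)).and (hann.and hRν)))
  refine ⟨C₁ * R ^ γ + C₂ + 1, by positivity, i₀, fun i hi x hx hνx => ?_⟩
  obtain ⟨⟨hsm, hdat⟩, hlami, hanni, hRi⟩ := hi₀ i hi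
  have hx0 : 0 < ‖x‖ := (hν0 i).trans_le hνx
  have hx1 : ‖x‖ < 1 := mem_ball_zero_iff.1 (hω hx)
  have hνγ : 0 < (ν i) ^ γ := rpow_pos_of_pos (hν0 i) _
  have hxγ : 0 < ‖x‖ ^ γ := rpow_pos_of_pos hx0 _
  have hxγ' : 0 < ‖x‖ ^ (-(2 * γ)) := rpow_pos_of_pos hx0 _
  rw [hexp]
  rcases le_total ‖x‖ (R * ν i) with hle | hge
  · refine (hanni x hνx hle).trans ?_
    have : C₂ ≤ C₁ * R ^ γ + C₂ + 1 := by
      have : 0 ≤ C₁ * R ^ γ := by positivity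
      linarith
    gcongr
  · set T := log (R * ν i) with hT
    have hT0 : T < 0 := log_neg (hpos i) hRi
    have h1 := hdecay (-T) (lam i) (emden γ T e (u i)) (by linarith) (hlam0 i).le hlami.le (hW i)
      hdat (hDir i) (fun t ht => ?_)
      (fun t ht => emden_equation hk1 hn hγdef he (hlam0 i).le (hu i) (hrad i) (heq i) ht.2)
      (log ‖x‖ - T) ⟨sub_nonneg.2 (log_le_log (hpos i) hge), by linarith [log_neg hx0 hx1]⟩
    · rw [emden_log_norm he (hrad i) hx0] at h1
      have h2 : exp (-γ * (log ‖x‖ - T)) = ‖x‖ ^ (-γ) * (R ^ γ * (ν i) ^ γ) := by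
        rw [← mul_rpow hR0.le (hν0 i).le, rpow_def_of_pos hx0, rpow_def_of_pos (hpos i), ← exp_add]
        congr 1; ring
      have h3 : ‖x‖ ^ (-(2 * γ)) * ‖x‖ ^ γ = ‖x‖ ^ (-γ) := by
        rw [← rpow_add hx0]; congr 1; ring
      rw [h2, ← h3] at h1
      have h4 : |u i x| ≤ C₁ * R ^ γ * (ν i) ^ γ * ‖x‖ ^ (-(2 * γ)) := by
        refine le_of_mul_le_mul_left (h1.trans_eq ?_) hxγ
        ring
      refine h4.trans ?_
      have : C₁ * R ^ γ ≤ C₁ * R ^ γ + C₂ + 1 := by linarith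
      gcongr
    · -- The point `exp (T + t) • e` lies in the region where `|x| ^ γ |u_i| < δ`.
      rw [← hδη]
      refine rpow_le_rpow (abs_nonneg _) ?_ (by linarith)
      have hy : ‖exp (T + t) • e‖ = exp (T + t) := by
        rw [norm_smul, he, mul_one, norm_eq_abs, abs_of_pos (exp_pos _)]
      have h5 := hsm (exp (T + t) • e) ⟨by
        rw [mem_ball_zero_iff, hy, exp_lt_one_iff]; linarith [ht.2], by
        rw [hy, exp_add, hT, exp_log (hpos i)]
        exact le_mul_of_one_le_right (hpos i).le (one_le_exp ht.1.le)⟩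
      rw [← emden_log_norm (T := T) he (hrad i) (by rw [hy]; exact exp_pos _), hy, log_exp,
        add_sub_cancel_left] at h5
      exact h5.le
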